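/- arXiv:1709.01225 — 9 statements merged into one kernel-verified Lean document; each statement's English description precedes it below -/
import Mathlib

section
/- For every tree T of order n ≥ 2, vcfc(T) ≤ ⌈log₂(n+1)⌉. -/
open SimpleGraph

/-- A vertex coloring with `k` colors makes `G` conflict-free vertex-connected if any two
distinct vertices are joined by a path on which some color is used on exactly one vertex. -/
def IsVCFCColoring {V : Type*} (G : SimpleGraph V) (k : ℕ) (c : V → Fin k) : Prop :=
  ∀ u v : V, u ≠ v → ∃ p : G.Walk u v, p.IsPath ∧
    ∃ i : Fin k, (p.support.filter (fun x => c x = i)).length = 1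

/-- The conflict-free vertex-connection number: the least number of colors in a
conflict-free vertex-connected coloring. -/
noncomputable def vcfc {V : Type*} (G : SimpleGraph V) : ℕ :=
  sInf {k | ∃ c : V → Fin k, IsVCFCColoring G k c}

theorem vcfc_sep_nbrs {V : Type*} {T : SimpleGraph V} (hT : T.IsAcyclic) {u v w : V}
    (hu : T.Adj w u) (hv : T.Adj w v) (huv : u ≠ v) (p : T.Walk u v) (hp : w ∉ p.support) :
    False := by
  classical
  have h1 : (Walk.cons hu.symm (Walk.cons hv Walk.nil)).IsPath := by
    simp [Walk.cons_isPath_iff, hv.ne, hu.ne', huv]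
  have h2 := hT.path_unique ⟨_, h1⟩ p.toPath
  apply hp
  apply p.support_toPath_subset_support
  rw [← h2]
  simp

theorem vcfc_sep_edge {V : Type*} {T : SimpleGraph V} (hT : T.IsAcyclic) {v w y : V}
    (h : T.Adj v w) (p : T.Walk w y) (hp : v ∉ p.support)
    (q : T.Walk v y) (hq : w ∉ q.support) : False := by
  classical
  have h1 : (Walk.cons h p.bypass).IsPath := by
    rw [Walk.cons_isPath_iff]
    exact ⟨p.bypass_isPath, fun hh => hp (p.support_bypass_subset_support hh)⟩
  have h2 := hT.path_unique ⟨_, h1⟩ q.toPath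
  apply hq
  apply q.support_toPath_subset_support
  rw [← h2]
  simp

/-- reachability inside `S` avoiding `v` -/
def VReach {V : Type*} (T : SimpleGraph V) (S : Finset V) (v x y : V) : Prop :=
  ∃ p : T.Walk x y, ∀ z ∈ p.support, z ∈ S ∧ z ≠ v

theorem VReach.symm {V : Type*} {T : SimpleGraph V} {S : Finset V} {v x y : V}
    (h : VReach T S v x y) : VReach T S v y x := by
  obtain ⟨p, hp⟩ := h
  exact ⟨p.reverse, by simpa using hp⟩

theorem VReach.trans {V : Type*} {T : SimpleGraph V} {S : Finset V} {v x y z : V}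
    (h : VReach T S v x y) (h' : VReach T S v y z) : VReach T S v x z := by
  obtain ⟨p, hp⟩ := h
  obtain ⟨q, hq⟩ := h'
  refine ⟨p.append q, fun a ha => ?_⟩
  rw [Walk.mem_support_append_iff] at ha
  exact ha.elim (hp a) (hq a)

theorem VReach.of_mem {V : Type*} {T : SimpleGraph V} {S : Finset V} {v x y a : V}
    (p : T.Walk x y) (hp : ∀ z ∈ p.support, z ∈ S ∧ z ≠ v) (ha : a ∈ p.support) :
    VReach T S v x a := by
  classical
  exact ⟨p.takeUntil a ha, fun z hz => hp z (p.support_takeUntil_subset_support ha hz)⟩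

open Classical in
/-- component of `x` in `S` minus `v` -/
noncomputable def vcomp {V : Type*} (T : SimpleGraph V) (S : Finset V) (v x : V) : Finset V :=
  S.filter (fun y => VReach T S v x y)

theorem mem_vcomp {V : Type*} {T : SimpleGraph V} {S : Finset V} {v x y : V} :
    y ∈ vcomp T S v x ↔ VReach T S v x y := by
  classical
  simp only [vcomp, Finset.mem_filter, and_iff_right_iff_imp]
  rintro ⟨p, hp⟩
  exact (hp y p.end_mem_support).1

theorem vcomp_eq {V : Type*} {T : SimpleGraph V} {S : Finset V} {v x y : V}
    (h : VReach T S v x y) : vcomp T S v y = vcomp T S v x := by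
  ext z
  rw [mem_vcomp, mem_vcomp]
  exact ⟨fun k => h.trans k, fun k => h.symm.trans k⟩

def VConn {V : Type*} (T : SimpleGraph V) (S : Finset V) : Prop :=
  ∀ x ∈ S, ∀ y ∈ S, ∃ p : T.Walk x y, ∀ z ∈ p.support, z ∈ S

theorem vcomp_conn {V : Type*} {T : SimpleGraph V} {S : Finset V} {v x : V} :
    VConn T (vcomp T S v x) := by
  intro a ha b hb
  rw [mem_vcomp] at ha hb
  obtain ⟨p, hp⟩ := ha.symm.trans hb
  exact ⟨p, fun z hz => mem_vcomp.2 (ha.trans (VReach.of_mem p hp hz))⟩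

theorem exists_nbr {V : Type*} {T : SimpleGraph V} {S : Finset V} (hS : VConn T S) {v x : V}
    (hv : v ∈ S) (hx : x ∈ S) (hxv : x ≠ v) : ∃ w, T.Adj v w ∧ VReach T S v x w := by
  classical
  obtain ⟨p, hp⟩ := hS v hv x hx
  have h1 : ∀ z ∈ p.bypass.support, z ∈ S := fun z hz => hp z (p.support_bypass_subset_support hz)
  have h2 := p.bypass_isPath
  generalize p.bypass = q at h1 h2
  cases q with
  | nil => exact absurd rfl hxv
  | cons h q =>
    rename_i w
    rw [Walk.cons_isPath_iff] at h2
    refine ⟨w, h, VReach.symm ⟨q, fun z hz => ⟨h1 z (by simp [hz]), ?_⟩⟩⟩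
    rintro rfl
    exact h2.2 hz

theorem exists_centroid {V : Type*} {T : SimpleGraph V} (hT : T.IsAcyclic) {S : Finset V}
    (hS : VConn T S) (hne : S.Nonempty) :
    ∃ v ∈ S, ∀ x ∈ S, x ≠ v → 2 * (vcomp T S v x).card ≤ S.card := by
  classical
  by_contra! hcon
  have key : ∀ v ∈ S, ∃ w ∈ S, T.Adj v w ∧ S.card < 2 * (vcomp T S v w).card := by
    intro v hv
    obtain ⟨x, hx, hxv, hc⟩ := hcon v hv
    obtain ⟨w, hw, hr⟩ := exists_nbr hS hv hx hxv
    refine ⟨w, ?_, hw, by rwa [vcomp_eq hr]⟩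
    obtain ⟨p, hp⟩ := hr
    exact (hp w p.end_mem_support).1
  choose! f hfS hadj hcard using key
  obtain ⟨v, hv, hmin⟩ := S.exists_min_image (fun v => (vcomp T S v (f v)).card) hne
  have hw := hfS v hv
  have hu := hfS _ hw
  have hvw := hadj v hv
  have hwu := hadj _ hw
  have c1 := hcard v hv
  have c2 := hcard _ hw
  have c3 := hmin _ hw
  generalize f v = w at *
  generalize f w = u at *
  by_cases huv : u = v
  · subst huv
    have hd : Disjoint (vcomp T S u w) (vcomp T S w u) := by
      rw [Finset.disjoint_left]
      intro y h1 h2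
      rw [mem_vcomp] at h1 h2
      obtain ⟨p, hp⟩ := h1
      obtain ⟨q, hq⟩ := h2
      exact vcfc_sep_edge hT hvw p (fun h => (hp _ h).2 rfl) q (fun h => (hq _ h).2 rfl)
    have hs : vcomp T S u w ∪ vcomp T S w u ⊆ S :=
      Finset.union_subset (Finset.filter_subset _ _) (Finset.filter_subset _ _)
    have := Finset.card_le_card hs
    rw [Finset.card_union_of_disjoint hd] at this
    omega
  · have hss : vcomp T S w u ⊂ vcomp T S v w := by
      rw [Finset.ssubset_iff_of_subset]
      · refine ⟨w, mem_vcomp.2 ⟨Walk.nil, by simp [hw, hvw.ne']⟩, ?_⟩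
        rw [mem_vcomp]
        rintro ⟨p, hp⟩
        exact (hp _ p.end_mem_support).2 rfl
      · intro y hy
        rw [mem_vcomp] at hy ⊢
        obtain ⟨p, hp⟩ := hy
        refine ⟨Walk.cons hwu p, fun z hz => ?_⟩
        rw [Walk.support_cons, List.mem_cons] at hz
        rcases hz with rfl | hz
        · exact ⟨hw, hvw.ne'⟩
        · refine ⟨(hp z hz).1, ?_⟩
          rintro rfl
          obtain ⟨q, hq⟩ := VReach.of_mem p hp hz
          exact vcfc_sep_nbrs hT hwu hvw.symm huv q (fun h => (hq _ h).2 rfl)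
    have := Finset.card_lt_card hss
    omega

theorem exists_ranking {V : Type*} {T : SimpleGraph V} (hT : T.IsAcyclic) (k : ℕ) :
    ∀ S : Finset V, VConn T S → S.card < 2 ^ k → ∃ c : V → ℕ, (∀ x ∈ S, c x < k) ∧
      ∀ (a b : V) (p : T.Walk a b), (∀ z ∈ p.support, z ∈ S) →
        ∃ x ∈ p.support, ∀ y ∈ p.support, y ≠ x → c y < c x := by
  classical
  induction k with
  | zero =>
    intro S _ hc
    have : S = ∅ := by simpa using hc
    subst this
    exact ⟨fun _ => 0, by simp, fun a b p hp => absurd (hp a p.start_mem_support) (by simp)⟩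
  | succ k ih =>
    intro S hS hc
    rcases S.eq_empty_or_nonempty with rfl | hne
    · exact ⟨fun _ => 0, by simp, fun a b p hp => absurd (hp a p.start_mem_support) (by simp)⟩
    obtain ⟨v, hv, hcen⟩ := exists_centroid hT hS hne
    choose! cc hcc1 hcc2 using ih
    have hsmall : ∀ x ∈ S, x ≠ v → (vcomp T S v x).card < 2 ^ k := by
      intro x hx hxv
      have := hcen x hx hxv
      rw [pow_succ] at hc
      omega
    have hself : ∀ x ∈ S, x ≠ v → x ∈ vcomp T S v x := fun x hx hxv =>
      mem_vcomp.2 ⟨Walk.nil, by simp [hx, hxv]⟩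
    have hlt : ∀ x ∈ S, x ≠ v → cc (vcomp T S v x) x < k := fun x hx hxv =>
      hcc1 _ vcomp_conn (hsmall x hx hxv) x (hself x hx hxv)
    refine ⟨fun x => if x = v then k else cc (vcomp T S v x) x, ?_, ?_⟩
    · intro x hx
      by_cases hxv : x = v
      · simp [hxv]
      · have := hlt x hx hxv
        simp only [hxv, if_false]
        omega
    · intro a b p hp
      by_cases hvp : v ∈ p.support
      · refine ⟨v, hvp, fun y hy hyv => ?_⟩
        simpa [hyv] using hlt y (hp y hy) hyv
      · have hp' : ∀ z ∈ p.support, z ∈ S ∧ z ≠ v := fun z hz =>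
          ⟨hp z hz, fun h => hvp (h ▸ hz)⟩
        have ha := hp' a p.start_mem_support
        obtain ⟨x, hx, hmax⟩ := hcc2 _ vcomp_conn (hsmall a ha.1 ha.2) a b p
          (fun z hz => mem_vcomp.2 (VReach.of_mem p hp' hz))
        refine ⟨x, hx, fun y hy hyx => ?_⟩
        have := hmax y hy hyx
        simpa [(hp' x hx).2, (hp' y hy).2, vcomp_eq (VReach.of_mem p hp' hx),
          vcomp_eq (VReach.of_mem p hp' hy)] using this

/-- For every tree `T` of order `n ≥ 2`, `vcfc(T) ≤ ⌈log₂(n+1)⌉`. -/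
theorem vcfc_tree_le_clog {V : Type*} [Fintype V] (T : SimpleGraph V) (hT : T.IsTree)
    (n : ℕ) (hn : Fintype.card V = n) (h2 : 2 ≤ n) :
    vcfc T ≤ Nat.clog 2 (n + 1) := by
  classical
  obtain ⟨c, hc, hr⟩ := exists_ranking hT.isAcyclic (Nat.clog 2 (n + 1)) Finset.univ
    (fun x _ y _ => ⟨(hT.connected.preconnected x y).some, by simp⟩)
    (by
      rw [Finset.card_univ, hn]
      exact Nat.lt_of_succ_le (Nat.le_pow_clog (by norm_num) _))
  apply Nat.sInf_le
  refine ⟨fun x => ⟨c x, hc x (Finset.mem_univ x)⟩, fun u v _ => ?_⟩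
  obtain ⟨q⟩ := hT.connected.preconnected u v
  refine ⟨q.bypass, q.bypass_isPath, ?_⟩
  obtain ⟨x, hx, hmax⟩ := hr u v q.bypass (by simp)
  refine ⟨⟨c x, hc x (Finset.mem_univ x)⟩, ?_⟩
  have hnd := q.bypass_isPath.support_nodup
  have : (q.bypass.support.filter (fun y =>
      (⟨c y, hc y (Finset.mem_univ y)⟩ : Fin _) = ⟨c x, hc x (Finset.mem_univ x)⟩))
      = q.bypass.support.filter (fun y => y == x) := by
    apply List.filter_congr
    intro y hy
    by_cases hyx : y = x
    · simp [hyx]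
    · have := (hmax y hy hyx).ne
      simp [hyx, this]
  rw [this, ← List.count_eq_length_filter]
  exact List.count_eq_one_of_mem hnd hx
end

section
/- For every connected simple graph G of order n ≥ 2, vcfc(G) ≤ ⌈log₂(n+1)⌉. -/
open SimpleGraph

namespace VCFCAux

/-- Remove all edges touching `S`. -/
def rem {V : Type*} (G : SimpleGraph V) (S : Set V) : SimpleGraph V where
  Adj a b := G.Adj a b ∧ a ∉ S ∧ b ∉ S
  symm := ⟨fun _ _ h => ⟨h.1.symm, h.2.2, h.2.1⟩⟩
  loopless := ⟨fun _ h => G.loopless.irrefl _ h.1⟩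

/-- The set of vertices reachable from `x`. -/
def comp {V : Type*} (G : SimpleGraph V) (x : V) : Set V := {y | G.Reachable x y}

lemma rem_le {V : Type*} (G : SimpleGraph V) (S : Set V) : rem G S ≤ G := fun _ _ h => h.1

lemma rem_anti {V : Type*} (G : SimpleGraph V) {S T : Set V} (h : S ⊆ T) :
    rem G T ≤ rem G S := fun _ _ hh => ⟨hh.1, fun a => hh.2.1 (h a), fun a => hh.2.2 (h a)⟩

lemma walk_rem {V : Type*} (G : SimpleGraph V) (S : Set V) {u v : V} (p : (rem G S).Walk u v)
    (hu : u ∉ S) : ∀ x ∈ p.support, x ∉ S := by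
  induction p with
  | nil => simpa using hu
  | cons h p ih =>
    intro x hx
    rw [Walk.support_cons, List.mem_cons] at hx
    rcases hx with rfl | hx
    · exact hu
    · exact ih h.2.2 x hx

lemma rem_isolated {V : Type*} (G : SimpleGraph V) (S : Set V) {u v : V}
    (hu : u ∈ S) (h : (rem G S).Reachable u v) : u = v := by
  obtain ⟨p⟩ := h
  cases p with
  | nil => rfl
  | cons h p => exact absurd hu h.2.1

lemma exists_path_of_rem {V : Type*} (G : SimpleGraph V) (S : Set V) {u v : V}
    (hu : u ∉ S) (h : (rem G S).Reachable u v) :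
    ∃ p : G.Walk u v, p.IsPath ∧ ∀ x ∈ p.support, x ∉ S := by
  obtain ⟨p, hp⟩ := h.exists_isPath
  refine ⟨p.mapLe (rem_le G S), ?_, ?_⟩
  · exact hp.mapLe _
  · intro x hx
    have : x ∈ p.support := by simpa using hx
    exact walk_rem G S p hu x this

lemma transfer_rem {V : Type*} (G : SimpleGraph V) (S : Set V) {u v : V} (p : G.Walk u v)
    (hp : ∀ x ∈ p.support, x ∉ S) : ∀ e ∈ p.edges, e ∈ (rem G S).edgeSet := by
  intro e he
  induction e with
  | _ a b =>
    exact ⟨p.adj_of_mem_edges he, hp _ (p.fst_mem_support_of_mem_edges he),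
      hp _ (p.snd_mem_support_of_mem_edges he)⟩

/-- nested branches -/
lemma branch_ssubset {V : Type*} (G : SimpleGraph V) (hG : G.IsAcyclic) {v w u : V}
    (hvw : G.Adj v w) (hwu : G.Adj w u) (huv : u ≠ v) :
    comp (rem G {w}) u ⊂ comp (rem G {v}) w := by
  rw [Set.ssubset_iff_of_subset]
  · refine ⟨w, Reachable.refl _, fun h => ?_⟩
    have := rem_isolated G {w} rfl (Reachable.symm h)
    exact hwu.ne this
  · intro x hx
    obtain ⟨p, hp, hps⟩ := exists_path_of_rem G {w} (by simpa using hwu.ne') hx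
    have hvp : v ∉ p.support := by
      classical
      intro hv
      let q := p.takeUntil v hv
      have hq : q.IsPath := hp.takeUntil hv
      have hwq : w ∉ q.support := fun h => hps w (p.support_takeUntil_subset_support hv h) rfl
      have h1 : (Walk.cons hwu q).IsPath := by
        rw [Walk.cons_isPath_iff]; exact ⟨hq, hwq⟩
      have h2 : (Walk.cons hvw.symm Walk.nil).IsPath := by
        rw [Walk.cons_isPath_iff]; simpa using hvw.ne'
      have := congrArg Subtype.val (hG.path_unique ⟨_, h1⟩ ⟨_, h2⟩)
      have h3 := congrArg Walk.support this
      have h4 : u ∈ (Walk.cons hwu q).support := by simp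
      rw [show (Walk.cons hwu q).support = _ from h3] at h4
      simp [huv, hwu.ne'] at h4
    have : ∀ x ∈ (Walk.cons hwu p).support, x ∉ ({v} : Set V) := by
      rintro y hy rfl
      rw [Walk.support_cons, List.mem_cons] at hy
      rcases hy with rfl | hy
      · exact hvw.ne rfl
      · exact hvp hy
    exact ⟨(Walk.cons hwu p).transfer _ (transfer_rem G {v} _ this)⟩

lemma branch_disjoint {V : Type*} (G : SimpleGraph V) (hG : G.IsAcyclic) {v w : V}
    (hvw : G.Adj v w) :
    Disjoint (comp (rem G {w}) v) (comp (rem G {v}) w) := by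
  rw [Set.disjoint_left]
  intro x h1 h2
  obtain ⟨p, hp, hps⟩ := exists_path_of_rem G {w} (by simpa using hvw.ne) h1
  obtain ⟨q, hq, hqs⟩ := exists_path_of_rem G {v} (by simpa using hvw.ne') h2
  have h1 : (Walk.cons hvw.symm p).IsPath := by
    rw [Walk.cons_isPath_iff]; exact ⟨hp, fun h => hps w h rfl⟩
  have := congrArg Subtype.val (hG.path_unique ⟨_, h1⟩ ⟨_, hq⟩)
  have h3 := congrArg Walk.support this
  have h4 : v ∈ (Walk.cons hvw.symm p).support := by simp
  rw [show (Walk.cons hvw.symm p).support = _ from h3] at h4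
  exact hqs v h4 rfl

lemma exists_centroid {V : Type*} [Finite V] (G : SimpleGraph V) (hG : G.IsAcyclic) (r : V) :
    ∃ v ∈ comp G r, ∀ w, G.Adj v w → 2 * (comp (rem G {v}) w).ncard ≤ (comp G r).ncard := by
  by_contra! hcon
  let P : Set (V × V) := {q | q.1 ∈ comp G r ∧ G.Adj q.1 q.2 ∧
    (comp G r).ncard < 2 * (comp (rem G {q.1}) q.2).ncard}
  have hP : P.Nonempty := by
    obtain ⟨w, h1, h2⟩ := hcon r (Reachable.refl _)
    exact ⟨(r, w), Reachable.refl _, h1, h2⟩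
  obtain ⟨⟨v, w⟩, ⟨hv, hvw, hlt⟩, hmin⟩ :=
    Set.exists_min_image P (fun q => (comp (rem G {q.1}) q.2).ncard) (Set.toFinite _) hP
  simp only at hv hvw hlt hmin
  have hw : w ∈ comp G r := Reachable.trans hv hvw.reachable
  obtain ⟨u, hwu, hu⟩ := hcon w hw
  by_cases huv : u = v
  · subst huv
    have hd := branch_disjoint G hG hvw
    have hc := Set.ncard_union_eq hd (Set.toFinite _) (Set.toFinite _)
    have hs : comp (rem G {w}) u ∪ comp (rem G {u}) w ⊆ comp G r := by
      rintro x (hx | hx)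
      · exact Reachable.trans hv (Reachable.mono (rem_le _ _) hx)
      · exact Reachable.trans hw (Reachable.mono (rem_le _ _) hx)
    have := Set.ncard_le_ncard hs (Set.toFinite _)
    omega
  · have h1 := Set.ncard_lt_ncard (branch_ssubset G hG hvw hwu huv) (Set.toFinite _)
    have h2 := hmin (w, u) ⟨hw, hwu, hu⟩
    simp only at h2
    omega

lemma centroid_comp {V : Type*} [Finite V] (G : SimpleGraph V) {v x : V} {m : ℕ}
    (h : ∀ w, G.Adj v w → 2 * (comp (rem G {v}) w).ncard ≤ m)
    (hr : G.Reachable v x) (hne : x ≠ v) :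
    2 * (comp (rem G {v}) x).ncard ≤ m := by
  obtain ⟨p, hp⟩ := hr.exists_isPath
  cases p with
  | nil => exact absurd rfl hne
  | @cons _ w _ hvw q =>
    rw [Walk.cons_isPath_iff] at hp
    have hwx : (rem G {v}).Reachable w x :=
      ⟨q.transfer _ (transfer_rem G {v} q (by rintro y hy rfl; exact hp.2 hy))⟩
    have : comp (rem G {v}) x = comp (rem G {v}) w := by
      ext y
      exact ⟨fun h => hwx.trans h, fun h => hwx.symm.trans h⟩
    rw [this]
    exact h w hvw

lemma ranking {V : Type*} [Finite V] (k : ℕ) : ∀ (G : SimpleGraph V), G.IsAcyclic →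
    (∀ x, (comp G x).ncard < 2 ^ (k + 1)) →
    ∃ c : V → ℕ, (∀ x, c x ≤ k) ∧ ∀ (u v : V) (p : G.Walk u v), p.IsPath →
      ∃ i, (p.support.filter (fun x => c x = i)).length = 1 := by
  classical
  induction k with
  | zero =>
    intro G hG h
    refine ⟨fun _ => 0, fun _ => le_rfl, fun u v p hp => ⟨0, ?_⟩⟩
    have h1 : (comp G u).ncard ≤ 1 := by have := h u; omega
    rw [Set.ncard_le_one (Set.toFinite _)] at h1
    have : u = v := h1 u (Reachable.refl _) v ⟨p⟩
    subst this
    rw [Walk.isPath_iff_eq_nil] at hp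
    subst hp
    simp
  | succ k ih =>
    intro G hG h
    have hcen : ∀ C : G.ConnectedComponent, ∃ v, G.connectedComponentMk v = C ∧
        ∀ w, G.Adj v w → 2 * (comp (rem G {v}) w).ncard < 2 ^ (k + 1 + 1) := by
      intro C
      induction C using ConnectedComponent.ind with
      | _ r =>
        obtain ⟨v, hv, hw⟩ := exists_centroid G hG r
        exact ⟨v, ConnectedComponent.sound (Reachable.symm hv),
          fun w hvw => (hw w hvw).trans_lt (h r)⟩
    choose cen hcen1 hcen2 using hcen
    let S : Set V := Set.range cen
    obtain ⟨c', hc1, hc2⟩ := ih (rem G S) (hG.anti (rem_le G S)) (by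
      intro x
      by_cases hx : x ∈ S
      · have : comp (rem G S) x ⊆ {x} := fun y hy => (rem_isolated G S hx hy).symm
        have h1 := Set.ncard_le_ncard this (Set.toFinite _)
        rw [Set.ncard_singleton] at h1
        have : 2 ^ (k + 1) = 2 * 2 ^ k := by ring
        have : 0 < 2 ^ k := by positivity
        omega
      · let v := cen (G.connectedComponentMk x)
        have hvS : v ∈ S := ⟨_, rfl⟩
        have hr : G.Reachable v x := ConnectedComponent.exact (hcen1 _)
        have h1 := centroid_comp G (m := 2 ^ (k + 1 + 1) - 1)
          (fun w hw => Nat.le_sub_one_of_lt (hcen2 _ w hw)) hr (fun e => hx (e ▸ hvS))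
        have h2 : comp (rem G S) x ⊆ comp (rem G {v}) x := fun y hy =>
          Reachable.mono (rem_anti G (by simpa using hvS)) hy
        have h3 := Set.ncard_le_ncard h2 (Set.toFinite _)
        have : 2 ^ (k + 1 + 1) = 2 * 2 ^ (k + 1) := by ring
        have : 0 < 2 ^ (k + 1) := by positivity
        change 2 * (comp (rem G {v}) x).ncard ≤ _ at h1
        omega)
    refine ⟨fun x => if x ∈ S then k + 1 else c' x, ?_, ?_⟩
    · intro x
      dsimp only
      split_ifs
      · exact le_rfl
      · exact (hc1 x).trans (Nat.le_succ k)
    · intro u v p hp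
      by_cases hS : ∀ x ∈ p.support, x ∉ S
      · obtain ⟨i, hi⟩ := hc2 u v (p.transfer _ (transfer_rem G S p hS)) (hp.transfer _)
        refine ⟨i, ?_⟩
        rw [Walk.support_transfer] at hi
        rw [← hi]
        congr 1
        apply List.filter_congr
        intro x hx
        simp [hS x hx]
      · push Not at hS
        obtain ⟨s, hs, hsS⟩ := hS
        refine ⟨k + 1, ?_⟩
        have hcount := List.count_eq_one_of_mem hp.support_nodup hs
        rw [List.count_eq_length_filter] at hcount
        refine Eq.trans ?_ hcount
        congr 1
        apply List.filter_congr
        intro x hx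
        have hre : G.connectedComponentMk x = G.connectedComponentMk s :=
          ConnectedComponent.sound
            ((p.takeUntil x hx).reachable.symm.trans (p.takeUntil s hs).reachable)
        have : x ∈ S ↔ x = s := by
          constructor
          · rintro ⟨C, rfl⟩
            obtain ⟨D, rfl⟩ := hsS
            rw [hcen1, hcen1] at hre
            rw [hre]
          · rintro rfl; exact hsS
        have hk := hc1 x
        by_cases hxs : x = s
        · subst hxs; simp [hsS]
        · have : x ∉ S := fun h => hxs (this.1 h)
          have h5 : c' x ≠ k + 1 := by omega
          simp [this, hxs, h5]

end VCFCAux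

/-- For every connected graph `G` of order `n ≥ 2`, `vcfc(G) ≤ ⌈log₂(n+1)⌉`. -/
theorem vcfc_le_clog {V : Type*} [Fintype V] (G : SimpleGraph V) (hG : G.Connected)
    (n : ℕ) (hn : Fintype.card V = n) (h2 : 2 ≤ n) :
    vcfc G ≤ Nat.clog 2 (n + 1) := by
  obtain ⟨T, hTG, hT⟩ := hG.exists_isTree_le
  have hle : n + 1 ≤ 2 ^ Nat.clog 2 (n + 1) := Nat.le_pow_clog (by norm_num) _
  generalize Nat.clog 2 (n + 1) = K at hle
  obtain _ | k := K
  · simp at hle; omega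
  obtain ⟨c, hc1, hc2⟩ := VCFCAux.ranking k T hT.isAcyclic (by
    intro x
    have := Set.ncard_le_card (VCFCAux.comp T x)
    rw [Nat.card_eq_fintype_card] at this
    omega)
  apply Nat.sInf_le
  refine ⟨fun x => ⟨c x, Nat.lt_succ_of_le (hc1 x)⟩, ?_⟩
  intro u v _
  obtain ⟨p, hp⟩ := (hT.connected u v).exists_isPath
  obtain ⟨i, hi⟩ := hc2 u v p hp
  refine ⟨p.mapLe hTG, hp.mapLe _, ?_⟩
  have hik : i < k + 1 := by
    obtain ⟨a, ha⟩ := List.length_eq_one_iff.1 hi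
    have : a ∈ p.support.filter (fun x => c x = i) := by rw [ha]; simp
    have h1 := (List.mem_filter.1 this).2
    simp only [decide_eq_true_eq] at h1
    have := hc1 a
    omega
  refine ⟨⟨i, hik⟩, ?_⟩
  refine Eq.trans ?_ hi
  simp
end

section
/- For every integer n ≥ 2, the path P_n on n vertices satisfies vcfc(P_n) = ⌈log₂(n+1)⌉. -/
open SimpleGraph

theorem mem_support_pathGraph {n : ℕ} {u v : Fin n} (p : (SimpleGraph.pathGraph n).Walk u v) :
    p.IsPath → u ≤ v → ∀ x, x ∈ p.support ↔ u ≤ x ∧ x ≤ v := by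
  induction p with
  | nil =>
    intro _ _ x
    simp only [Walk.support_nil, List.mem_singleton]
    constructor
    · rintro rfl; simp
    · rintro ⟨h1, h2⟩; exact le_antisymm h2 h1
  | @cons a w b h p ih =>
    intro hp hab x
    rw [Walk.cons_isPath_iff] at hp
    obtain ⟨hp, hn⟩ := hp
    have hne : a ≠ b := by
      rintro rfl
      exact hn p.end_mem_support
    have hlt : a.val < b.val := lt_of_le_of_ne hab (fun h => hne (Fin.ext h))
    rw [SimpleGraph.pathGraph_adj] at h
    have hwb : w ≤ b := by
      rw [Fin.le_def]; omega
    have ih' := ih hp hwb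
    rw [ih'] at hn
    rw [Walk.support_cons, List.mem_cons, ih']
    simp only [Fin.le_def, Fin.ext_iff] at *
    omega

theorem filter_length_one {α β : Type*} [DecidableEq α] [DecidableEq β] (l : List α)
    (hl : l.Nodup) (c : α → β) (i : β) :
    (l.filter (fun x => c x = i)).length = 1 ↔
      ∃ x ∈ l, c x = i ∧ ∀ y ∈ l, c y = i → y = x := by
  rw [← List.toFinset_card_of_nodup (hl.filter _), Finset.card_eq_one]
  constructor
  · rintro ⟨x, hx⟩
    simp only [Finset.ext_iff, List.mem_toFinset, List.mem_filter, decide_eq_true_eq,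
      Finset.mem_singleton] at hx
    have := (hx x).2 rfl
    exact ⟨x, this.1, this.2, fun y h1 h2 => (hx y).1 ⟨h1, h2⟩⟩
  · rintro ⟨x, h1, h2, h3⟩
    refine ⟨x, ?_⟩
    simp only [Finset.ext_iff, List.mem_toFinset, List.mem_filter, decide_eq_true_eq,
      Finset.mem_singleton]
    intro y
    constructor
    · rintro ⟨h, h'⟩; exact h3 y h h'
    · rintro rfl; exact ⟨h1, h2⟩

theorem interval_bound {α : Type*} [DecidableEq α] (n : ℕ) (c : ℕ → α)
    (H : ∀ u v, u ≤ v → v < n → ∃ x, u ≤ x ∧ x ≤ v ∧ ∀ y, u ≤ y → y ≤ v → c y = c x → y = x)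
    (k : ℕ) : ∀ (S : Finset α), S.card = k → ∀ a b, b ≤ n →
      (∀ x, a ≤ x → x < b → c x ∈ S) → b - a < 2 ^ k := by
  induction k with
  | zero =>
    intro S hS a b _ h
    rw [Finset.card_eq_zero] at hS
    subst hS
    by_contra hc
    have := h a le_rfl (by simp at hc; omega)
    simp at this
  | succ k ih =>
    intro S hS a b hb h
    by_cases hab : b ≤ a
    · rw [Nat.sub_eq_zero_of_le hab]; positivity
    obtain ⟨x, h1, h2, h3⟩ := H a (b - 1) (by omega) (by omega)
    have hx := h x h1 (by omega)
    have hc : (S.erase (c x)).card = k := by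
      rw [Finset.card_erase_of_mem hx, hS]; rfl
    have e1 := ih _ hc a x (by omega) (fun y hy hy' => by
      refine Finset.mem_erase.2 ⟨fun e => ?_, h y hy (by omega)⟩
      have := h3 y hy (by omega) e
      omega)
    have e2 := ih _ hc (x + 1) b hb (fun y hy hy' => by
      refine Finset.mem_erase.2 ⟨fun e => ?_, h y (by omega) (by omega)⟩
      have := h3 y (by omega) (by omega) e
      omega)
    rw [pow_succ]
    omega

theorem ruler_unique (p q : ℕ) (hp : 0 < p) (hpq : p < q)
    (h : padicValNat 2 p = padicValNat 2 q) :
    ∃ r, p < r ∧ r < q ∧ padicValNat 2 p < padicValNat 2 r := by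
  set i := padicValNat 2 p with hi
  obtain ⟨a, ha⟩ : 2 ^ i ∣ p := pow_padicValNat_dvd
  obtain ⟨b, hb⟩ : 2 ^ i ∣ q := h ▸ pow_padicValNat_dvd
  have hpos : 0 < 2 ^ i := by positivity
  have ha2 : ¬ 2 ∣ a := by
    rintro ⟨d, rfl⟩
    exact pow_succ_padicValNat_not_dvd (p := 2) hp.ne' ⟨d, by rw [← hi, pow_succ, mul_assoc]; exact ha⟩
  have hb2 : ¬ 2 ∣ b := by
    rintro ⟨d, rfl⟩
    exact pow_succ_padicValNat_not_dvd (p := 2) (n := q) (by omega)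
      ⟨d, by rw [← h, pow_succ, mul_assoc]; exact hb⟩
  have hab : a < b := by
    rw [ha, hb] at hpq
    exact lt_of_mul_lt_mul_left hpq hpos.le
  refine ⟨2 ^ i * (a + 1), ?_, ?_, ?_⟩
  · conv_lhs => rw [ha]
    exact Nat.mul_lt_mul_of_pos_left (by omega) hpos
  · conv_rhs => rw [hb]
    exact Nat.mul_lt_mul_of_pos_left (by omega) hpos
  · apply (padicValNat_dvd_iff_le (p := 2) (n := i + 1) (by positivity)).1
    rw [pow_succ]
    exact Nat.mul_dvd_mul_left _ (by omega)

/-- For every `n ≥ 2`, the path on `n` vertices satisfies `vcfc(Pₙ) = ⌈log₂(n+1)⌉`. -/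
theorem vcfc_pathGraph (n : ℕ) (h2 : 2 ≤ n) :
    vcfc (SimpleGraph.pathGraph n) = Nat.clog 2 (n + 1) := by
  unfold vcfc
  apply IsLeast.csInf_eq
  constructor
  · have hk : n + 1 ≤ 2 ^ Nat.clog 2 (n + 1) := Nat.le_pow_clog (by norm_num) _
    generalize Nat.clog 2 (n + 1) = k at hk
    have hv : ∀ x : Fin n, padicValNat 2 (x.val + 1) < k := by
      intro x
      have h1 : 2 ^ padicValNat 2 (x.val + 1) ≤ x.val + 1 :=
        Nat.le_of_dvd (by omega) pow_padicValNat_dvd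
      by_contra hc
      have hmono : 2 ^ k ≤ 2 ^ padicValNat 2 (x.val + 1) :=
        Nat.pow_le_pow_right (by norm_num) (not_lt.1 hc)
      have := x.isLt
      omega
    refine ⟨fun x => ⟨padicValNat 2 (x.val + 1), hv x⟩, ?_⟩
    have key : ∀ u v : Fin n, u ≤ v → ∃ p : (pathGraph n).Walk u v, p.IsPath ∧
        ∃ i : Fin k, (p.support.filter
          (fun x => (⟨padicValNat 2 (x.val + 1), hv x⟩ : Fin k) = i)).length = 1 := by
      intro u v huv
      obtain ⟨w⟩ := pathGraph_preconnected n u v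
      obtain ⟨p, hp⟩ := w.toPath
      refine ⟨p, hp, ?_⟩
      obtain ⟨x, hx, hmax⟩ := (Finset.Icc u v).exists_max_image
        (fun x => padicValNat 2 (x.val + 1)) ⟨u, by simp [huv]⟩
      simp only [Finset.mem_Icc] at hx hmax
      refine ⟨⟨padicValNat 2 (x.val + 1), hv x⟩, ?_⟩
      rw [filter_length_one _ hp.support_nodup]
      refine ⟨x, (mem_support_pathGraph p hp huv x).2 hx, rfl, ?_⟩
      intro y hy e
      rw [mem_support_pathGraph p hp huv] at hy
      simp only [Fin.mk.injEq] at e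
      simp only [Fin.le_def] at hx hy hmax
      rcases lt_trichotomy y.val x.val with hlt | heq | hlt
      · obtain ⟨r, r1, r2, r3⟩ := ruler_unique _ _ (by omega) (Nat.succ_lt_succ hlt) e
        have := hmax ⟨r - 1, by omega⟩ (by constructor <;> simp <;> omega)
        simp only [Nat.sub_add_cancel (show 1 ≤ r by omega)] at this
        simp only [Nat.succ_eq_add_one] at r3
        omega
      · exact Fin.ext heq
      · obtain ⟨r, r1, r2, r3⟩ := ruler_unique _ _ (by omega) (Nat.succ_lt_succ hlt) e.symm
        have := hmax ⟨r - 1, by omega⟩ (by constructor <;> simp <;> omega)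
        simp only [Nat.sub_add_cancel (show 1 ≤ r by omega)] at this
        simp only [Nat.succ_eq_add_one] at r3
        omega
    intro u v _
    rcases le_total u v with h | h
    · exact key u v h
    · obtain ⟨p, hp, i, hi⟩ := key v u h
      refine ⟨p.reverse, hp.reverse, i, ?_⟩
      rw [Walk.support_reverse, List.filter_reverse, List.length_reverse]
      exact hi
  · rintro k ⟨c, hc⟩
    apply Nat.clog_le_of_le_pow
    have hn : 0 < n := by omega
    have := interval_bound n (fun x => c ⟨min x (n - 1), by omega⟩) (by
      intro u v huv hv
      rcases huv.eq_or_lt with rfl | hlt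
      · exact ⟨u, le_rfl, le_rfl, fun y h1 h2 _ => le_antisymm h2 h1⟩
      obtain ⟨p, hp, i, hi⟩ := hc ⟨u, by omega⟩ ⟨v, hv⟩ (by simp; omega)
      rw [filter_length_one _ hp.support_nodup] at hi
      obtain ⟨x, hx, hxi, hu⟩ := hi
      have hs := mem_support_pathGraph p hp (by simpa using huv)
      rw [hs] at hx
      simp only [Fin.le_def] at hx
      refine ⟨x.val, hx.1, hx.2, ?_⟩
      intro y h1 h2 e
      have hxm : (⟨min x.val (n - 1), by omega⟩ : Fin n) = x := by
        ext; simp; omega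
      have hym : (⟨min y (n - 1), by omega⟩ : Fin n) = ⟨y, by omega⟩ := by
        ext; simp; omega
      simp only [hxm, hym] at e
      have := hu ⟨y, by omega⟩ ((hs _).2 ⟨h1, h2⟩) (e.trans hxi)
      exact congrArg Fin.val this) k Finset.univ (by simp) 0 n le_rfl (by simp)
    omega
end

section
/- Let G be a connected simple graph of order at least 3. Then vcfc(G) = 2 if and only if G is 2-connected or G has exactly one cut vertex. -/
open SimpleGraph

/-- Walks avoiding `x` from connectivity of the vertex-deleted subgraph. -/
theorem exists_avoiding {V : Type*} {G : SimpleGraph V} {x : V}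
    (h : (G.induce {u | u ≠ x}).Connected) {s t : V} (hs : s ≠ x) (ht : t ≠ x) :
    ∃ p : G.Walk s t, p.IsPath ∧ x ∉ p.support := by
  classical
  obtain ⟨q⟩ := h.preconnected ⟨s, hs⟩ ⟨t, ht⟩
  let q' : G.Walk s t := q.map (Embedding.induce {u | u ≠ x}).toHom
  have hq : x ∉ q'.support := by
    intro hx
    have hx' : x ∈ (q.map (Embedding.induce {u | u ≠ x}).toHom).support := hx
    rw [Walk.support_map, List.mem_map] at hx'
    obtain ⟨y, -, hy⟩ := hx'
    exact y.2 hy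
  exact ⟨q'.bypass, q'.bypass_isPath, fun hx => hq (q'.support_bypass_subset_support hx)⟩

/-- If deleting `x` disconnects `G`, some vertex is separated from `y` by `x`. -/
theorem exists_separated {V : Type*} {G : SimpleGraph V} {x y : V} (hxy : x ≠ y)
    (h : ¬ (G.induce {u | u ≠ x}).Connected) :
    ∃ a, a ≠ x ∧ ∀ p : G.Walk a y, x ∈ p.support := by
  by_contra hcon
  push Not at hcon
  apply h
  have : Nonempty ({u | u ≠ x} : Set V) := ⟨⟨y, hxy.symm⟩⟩
  have key : ∀ s : ({u | u ≠ x} : Set V),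
      (G.induce {u | u ≠ x}).Reachable s ⟨y, hxy.symm⟩ := by
    rintro ⟨s, hs⟩
    obtain ⟨p, hp⟩ := hcon s hs
    exact ⟨p.induce {u | u ≠ x} (fun z hz hzx => hp (hzx ▸ hz))⟩
  exact ⟨fun s t => (key s).trans (key t).symm⟩

theorem isPath_append_of_inter {V : Type*} {G : SimpleGraph V} {a b c : V}
    {p : G.Walk a b} {q : G.Walk b c} (hp : p.IsPath) (hq : q.IsPath)
    (h : ∀ z ∈ p.support, z ∈ q.support → z = b) : (p.append q).IsPath := by
  rw [Walk.isPath_def, Walk.support_append, List.nodup_append']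
  refine ⟨hp.support_nodup, hq.support_nodup.tail, ?_⟩
  intro z hz hz'
  have hzb := h z hz (List.mem_of_mem_tail hz')
  subst hzb
  have := hq.support_nodup
  rw [← Walk.cons_tail_support, List.nodup_cons] at this
  exact this.1 hz'

theorem exists_first_hit {V : Type*} {G : SimpleGraph V} {u w : V} (T : G.Walk u w)
    (hT : T.IsPath) (S : List V) (hw : w ∈ S) :
    ∃ x ∈ S, ∃ T' : G.Walk u x, T'.IsPath ∧ (∀ z ∈ T'.support, z ∈ T.support) ∧
      ∀ z ∈ T'.support, z ∈ S → z = x := by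
  classical
  obtain ⟨x, hxS, hx, h⟩ := T.exists_mem_support_forall_mem_support_imp_eq S.toFinset
    ⟨w, by simp [hw]⟩
  exact ⟨x, by simpa using hxS, T.takeUntil x hx, hT.takeUntil hx,
    fun z hz => T.support_takeUntil_subset_support hx hz,
    fun z hz hzS => h z (by simpa using hzS) hz⟩

/-- If no vertex other than `w` is a cut vertex, any two vertices are joined by a path
through `w`. -/
theorem exists_path_through {V : Type*} {G : SimpleGraph V} (hG : G.Connected) {w : V}
    (h : ∀ x, x ≠ w → (G.induce {u | u ≠ x}).Connected) (v : V) :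
    ∀ u, u ≠ v → ∃ p : G.Walk u v, p.IsPath ∧ w ∈ p.support := by
  classical
  obtain ⟨W⟩ := hG.preconnected v w
  induction W with
  | nil =>
    intro u _
    obtain ⟨p⟩ := hG.preconnected u _
    exact ⟨p.bypass, p.bypass_isPath, Walk.end_mem_support _⟩
  | @cons v v1 w hadj W ih =>
    intro u huv
    by_cases hvw : v = w
    · subst hvw
      obtain ⟨p⟩ := hG.preconnected u v
      exact ⟨p.bypass, p.bypass_isPath, Walk.end_mem_support _⟩
    obtain ⟨R, hR, hwR⟩ := ih h v hadj.ne
    obtain ⟨R1, R2, h1, h2, rfl⟩ := hR.mem_support_iff_exists_append.mp hwR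
    obtain ⟨T, hT, hvT⟩ := exists_avoiding (h v hvw) huv (Ne.symm hvw)
    obtain ⟨x, hxR, T', hT', hsub, hint⟩ := exists_first_hit T hT _ hwR
    have hvT' : v ∉ T'.support := fun hv => hvT (hsub _ hv)
    have hxv : x ≠ v := fun hx => hvT' (hx ▸ T'.end_mem_support)
    rw [Walk.mem_support_append_iff] at hxR
    rcases hxR with hx | hx
    · obtain ⟨A, B, hA, hB, rfl⟩ := h1.mem_support_iff_exists_append.mp hx
      rw [← Walk.append_assoc] at hR
      have hv : v ∉ (B.append R2).support := fun hv =>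
        hR.ne_of_mem_support_of_append hxv.symm A.start_mem_support hv rfl
      have hp : (T'.append (B.append R2)).IsPath := by
        refine isPath_append_of_inter hT' hR.of_append_right ?_
        intro z hz hz'
        refine hint z hz ?_
        simp only [Walk.mem_support_append_iff] at hz' ⊢
        tauto
      refine ⟨(T'.append (B.append R2)).concat hadj.symm, hp.concat ?_ _, ?_⟩
      · rw [Walk.mem_support_append_iff]
        tauto
      · simp [Walk.support_concat, Walk.mem_support_append_iff]
    · obtain ⟨A, B, hA, hB, rfl⟩ := h2.mem_support_iff_exists_append.mp hx
      rw [Walk.append_assoc] at hR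
      refine ⟨T'.append (R1.append A).reverse, ?_, ?_⟩
      · refine isPath_append_of_inter hT' hR.of_append_left.reverse ?_
        intro z hz hz'
        refine hint z hz ?_
        simp only [Walk.mem_support_append_iff, Walk.support_reverse, List.mem_reverse] at hz' ⊢
        tauto
      · simp [Walk.mem_support_append_iff]

theorem not_filter_length_one {α : Type*} {k : ℕ} {c : α → Fin k} {l : List α} {i : Fin k}
    {a b : α} (hab : a ≠ b) (ha : a ∈ l) (hb : b ∈ l) (hca : c a = i) (hcb : c b = i) :
    (l.filter (fun x => c x = i)).length ≠ 1 := by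
  intro h
  obtain ⟨z, hz⟩ := List.length_eq_one_iff.mp h
  have h1 : a ∈ l.filter (fun x => c x = i) := by simp [ha, hca]
  have h2 : b ∈ l.filter (fun x => c x = i) := by simp [hb, hcb]
  rw [hz, List.mem_singleton] at h1 h2
  exact hab (h1.trans h2.symm)

/-- The part cut off from `y` by `x` (together with `x`) is not monochromatic. -/
theorem exists_other_color {V : Type*} {G : SimpleGraph V} {k : ℕ} {c : V → Fin k}
    (hc : IsVCFCColoring G k c) {x y : V} (hxy : x ≠ y)
    (h : ¬ (G.induce {u | u ≠ x}).Connected) :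
    ∃ a, c a ≠ c x ∧ ∀ p : G.Walk a y, x ∈ p.support := by
  obtain ⟨a, hax, ha⟩ := exists_separated hxy h
  obtain ⟨p, hp, i, hi⟩ := hc a x hax
  have : ∃ z ∈ p.support, c z ≠ c x := by
    by_contra hcon
    push Not at hcon
    by_cases hix : c x = i
    · exact not_filter_length_one hax p.start_mem_support p.end_mem_support
        ((hcon a p.start_mem_support).trans hix) hix hi
    · obtain ⟨z, hz⟩ := List.length_eq_one_iff.mp hi
      have h1 : z ∈ p.support.filter (fun x => c x = i) := by simp [hz]
      simp only [List.mem_filter, decide_eq_true_eq] at h1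
      exact hix ((hcon z h1.1).symm.trans h1.2)
  obtain ⟨z, hz, hzc⟩ := this
  refine ⟨z, hzc, fun q => ?_⟩
  obtain ⟨A, B, hA, hB, rfl⟩ := hp.mem_support_iff_exists_append.mp hz
  have hzx : x ≠ z := fun hzx => hzc (hzx ▸ rfl)
  have := ha (A.append q)
  rw [Walk.mem_support_append_iff] at this
  exact this.resolve_left fun hxA =>
    hp.ne_of_mem_support_of_append hzx hxA B.end_mem_support rfl

theorem mem_of_separated {V : Type*} {G : SimpleGraph V} (hG : G.Connected) {x y a b : V}
    (hxy : x ≠ y) (ha : ∀ p : G.Walk a y, x ∈ p.support) (hb : ∀ p : G.Walk b x, y ∈ p.support)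
    (p : G.Walk a b) : x ∈ p.support := by
  classical
  obtain ⟨q⟩ := hG.preconnected b x
  have hq := q.bypass_isPath
  obtain ⟨A, B, hA, hB, hAB⟩ := hq.mem_support_iff_exists_append.mp (hb q.bypass)
  rw [hAB] at hq
  have := ha (p.append A)
  rw [Walk.mem_support_append_iff] at this
  exact this.resolve_right fun hxA =>
    hq.ne_of_mem_support_of_append hxy hxA B.end_mem_support rfl

theorem not_two_cut {V : Type*} {G : SimpleGraph V} (hG : G.Connected) {c : V → Fin 2}
    (hc : IsVCFCColoring G 2 c) {x y : V} (hxy : x ≠ y)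
    (hx : ¬ (G.induce {u | u ≠ x}).Connected) (hy : ¬ (G.induce {u | u ≠ y}).Connected) :
    False := by
  obtain ⟨a, hac, ha⟩ := exists_other_color hc hxy hx
  obtain ⟨b, hbc, hb⟩ := exists_other_color hc hxy.symm hy
  have hx' : ∀ p : G.Walk a b, x ∈ p.support := mem_of_separated hG hxy ha hb
  have hy' : ∀ p : G.Walk a b, y ∈ p.support := fun p => by
    have := mem_of_separated hG hxy.symm hb ha p.reverse
    simpa using this
  have hay : a ≠ y := by
    rintro rfl
    have := ha Walk.nil
    simp at this
    exact hxy this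
  have hbx : b ≠ x := by
    rintro rfl
    have := hb Walk.nil
    simp at this
    exact hxy this.symm
  have hab : a ≠ b := by
    rintro rfl
    have := hy' Walk.nil
    simp at this
    exact hay this.symm
  have hax : a ≠ x := fun h => hac (h ▸ rfl)
  have hby : b ≠ y := fun h => hbc (h ▸ rfl)
  obtain ⟨p, hp, i, hi⟩ := hc a b hab
  have mx := hx' p
  have my := hy' p
  have ma := p.start_mem_support
  have mb := p.end_mem_support
  by_cases hcxy : c x = c y
  · by_cases hxi : c x = i
    · exact not_filter_length_one hxy mx my hxi (hcxy ▸ hxi) hi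
    · exact not_filter_length_one hab ma mb (by omega) (by omega) hi
  · by_cases hxi : c x = i
    · exact not_filter_length_one hbx mb mx (by omega) hxi hi
    · exact not_filter_length_one hay ma my (by omega) (by omega) hi

theorem isVCFCColoring_of_through {V : Type*} {G : SimpleGraph V} (hG : G.Connected) {w : V}
    (h : ∀ x, x ≠ w → (G.induce {u | u ≠ x}).Connected) :
    ∃ c : V → Fin 2, IsVCFCColoring G 2 c := by
  classical
  refine ⟨fun x => if x = w then 0 else 1, fun u v huv => ?_⟩
  obtain ⟨p, hp, hw⟩ := exists_path_through hG h v u huv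
  refine ⟨p, hp, 0, ?_⟩
  have : (fun x => decide ((if x = w then (0 : Fin 2) else 1) = 0)) = fun x => x == w := by
    funext x
    by_cases hx : x = w <;> simp [hx]
  rw [this, ← List.countP_eq_length_filter]
  exact List.count_eq_one_of_mem hp.support_nodup hw

theorem vcfc_two_iff_exists {V : Type*} [Fintype V] (G : SimpleGraph V)
    (h3 : 3 ≤ Fintype.card V) :
    vcfc G = 2 ↔ ∃ c : V → Fin 2, IsVCFCColoring G 2 c := by
  unfold vcfc
  constructor
  · intro h
    have hne : {k | ∃ c : V → Fin k, IsVCFCColoring G k c}.Nonempty := by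
      rw [Set.nonempty_iff_ne_empty]
      intro h0
      rw [h0] at h
      simp at h
    have := Nat.sInf_mem hne
    rw [h] at this
    exact this
  · intro h
    apply le_antisymm (Nat.sInf_le h)
    apply le_csInf ⟨2, h⟩
    rintro k ⟨c, hc⟩
    by_contra hk
    obtain ⟨u, v, huv⟩ := Fintype.one_lt_card_iff.mp (show 1 < Fintype.card V by omega)
    obtain ⟨p, hp, i, hi⟩ := hc u v huv
    have hsub : ∀ j : Fin k, j = i := fun j => by
      have := j.2
      have := i.2
      ext
      omega
    exact not_filter_length_one huv p.start_mem_support p.end_mem_support (hsub _) (hsub _) hi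

/-- For a connected graph `G` of order at least 3, `vcfc(G) = 2` iff `G` is 2-connected
(every vertex-deleted subgraph is connected) or `G` has exactly one cut vertex. -/
theorem vcfc_eq_two_iff {V : Type*} [Fintype V] (G : SimpleGraph V) (hG : G.Connected)
    (h3 : 3 ≤ Fintype.card V) :
    vcfc G = 2 ↔
      ((∀ v : V, (G.induce {u | u ≠ v}).Connected) ∨
        (∃! v : V, ¬ (G.induce {u | u ≠ v}).Connected)) := by
  rw [vcfc_two_iff_exists G h3]
  constructor
  · rintro ⟨c, hc⟩
    by_cases h : ∀ v : V, (G.induce {u | u ≠ v}).Connected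
    · exact Or.inl h
    · right
      obtain ⟨x, hx⟩ := not_forall.mp h
      refine ⟨x, hx, fun y hy => ?_⟩
      by_contra hyx
      exact not_two_cut hG hc hyx hy hx
  · rintro (h | ⟨w, hw, huniq⟩)
    · obtain ⟨w⟩ := hG.nonempty
      exact isVCFCColoring_of_through hG (w := w) fun x _ => h x
    · refine isVCFCColoring_of_through hG (w := w) fun x hx => ?_
      by_contra hcon
      exact hx (huniq x hcon)
end

section
/- For every tree T of order n ≥ 3, vcfc(T) ≤ log_{3/2} n, i.e., vcfc(T) ≤ (log n)/(log(3/2)). -/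
open SimpleGraph

/-- `u` and `v` are joined by a walk inside `S`. -/
def ReachIn {V : Type*} (G : SimpleGraph V) (S : Set V) (u v : V) : Prop :=
  ∃ p : G.Walk u v, ∀ x ∈ p.support, x ∈ S

lemma ReachIn.symm {V : Type*} {G : SimpleGraph V} {S : Set V} {u v : V}
    (h : ReachIn G S u v) : ReachIn G S v u := by
  obtain ⟨p, hp⟩ := h
  exact ⟨p.reverse, by simpa using hp⟩

lemma ReachIn.trans {V : Type*} {G : SimpleGraph V} {S : Set V} {u v w : V}
    (h : ReachIn G S u v) (h' : ReachIn G S v w) : ReachIn G S u w := by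
  obtain ⟨p, hp⟩ := h
  obtain ⟨q, hq⟩ := h'
  refine ⟨p.append q, fun x hx => ?_⟩
  rw [Walk.mem_support_append_iff] at hx
  exact hx.elim (hp x) (hq x)

lemma ReachIn.mem_right {V : Type*} {G : SimpleGraph V} {S : Set V} {u v : V}
    (h : ReachIn G S u v) : v ∈ S := by
  obtain ⟨p, hp⟩ := h
  exact hp _ p.end_mem_support

lemma ReachIn.mono {V : Type*} {G : SimpleGraph V} {S S' : Set V} (hS : S ⊆ S') {u v : V}
    (h : ReachIn G S u v) : ReachIn G S' u v := by
  obtain ⟨p, hp⟩ := h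
  exact ⟨p, fun x hx => hS (hp x hx)⟩

lemma reachIn_refl {V : Type*} {G : SimpleGraph V} {S : Set V} {u : V}
    (h : u ∈ S) : ReachIn G S u u := ⟨Walk.nil, by simpa using h⟩

lemma reachIn_of_walk {V : Type*} {G : SimpleGraph V} {S : Set V} {u v : V}
    (p : G.Walk u v) (hp : ∀ x ∈ p.support, x ∈ S) {x : V} (hx : x ∈ p.support) :
    ReachIn G S u x := by
  classical
  exact ⟨p.takeUntil x hx, fun y hy => hp y (p.support_takeUntil_subset_support hx hy)⟩

/-- The component of `u` inside `S`. -/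
def compIn {V : Type*} (G : SimpleGraph V) (S : Set V) (u : V) : Set V :=
  {v | ReachIn G S u v}

lemma compIn_eq {V : Type*} {G : SimpleGraph V} {S : Set V} {u v : V}
    (h : ReachIn G S u v) : compIn G S u = compIn G S v := by
  ext w
  exact ⟨fun h' => h.symm.trans h', fun h' => h.trans h'⟩

lemma dist_of_path {V : Type*} {G : SimpleGraph V} (hG : G.IsAcyclic) {u v : V}
    (p : G.Walk u v) (hp : p.IsPath) : G.dist u v = p.length := by
  obtain ⟨q, hq, hl⟩ := p.reachable.exists_path_of_dist
  have := hG.path_unique ⟨p, hp⟩ ⟨q, hq⟩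
  have h2 : p = q := congrArg Subtype.val this
  rw [h2, hl]

lemma exists_centroid_s5 {V : Type*} [Fintype V] {G : SimpleGraph V} (hG : G.IsTree)
    (S : Set V) (a : V) (ha : a ∈ S) :
    ∃ x ∈ compIn G S a, ∀ u ∈ compIn G S a, u ≠ x →
      2 * (compIn G (S \ {x}) u).ncard ≤ (compIn G S a).ncard := by
  classical
  set C := (compIn G S a).toFinset with hC
  have hmem : ∀ v, v ∈ C ↔ ReachIn G S a v := fun v => Set.mem_toFinset
  obtain ⟨x, hx, hmin⟩ := C.exists_min_image (fun x => ∑ v ∈ C, G.dist x v)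
    ⟨a, (hmem a).2 (reachIn_refl ha)⟩
  have hxa := (hmem x).1 hx
  refine ⟨x, hxa, fun u hu hux => ?_⟩
  obtain ⟨p, hp⟩ := hxa.symm.trans hu
  have hq : p.bypass.IsPath := p.bypass_isPath
  have hqS : ∀ y ∈ p.bypass.support, y ∈ S := fun y hy => hp y (p.support_bypass_subset_support hy)
  generalize p.bypass = q at hq hqS
  cases q with
  | nil => exact absurd rfl hux
  | @cons _ y _ hxy r =>
  rw [Walk.cons_isPath_iff] at hq
  have hyr : ReachIn G (S \ {x}) y u := ⟨r, fun z hz => ⟨hqS z (by simp [hz]), by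
    rintro rfl; exact hq.2 hz⟩⟩
  rw [← compIn_eq hyr]
  set B := (compIn G (S \ {x}) y).toFinset with hB
  have hBm : ∀ v, v ∈ B ↔ ReachIn G (S \ {x}) y v := fun v => Set.mem_toFinset
  have hayS : ReachIn G S a y := ReachIn.trans hu (hyr.symm.mono Set.sdiff_subset)
  have hBC : B ⊆ C := fun v hv => (hmem v).2 (hayS.trans (((hBm v).1 hv).mono Set.sdiff_subset))
  rw [Set.ncard_eq_toFinset_card', Set.ncard_eq_toFinset_card', ← hB, ← hC]
  have h1 : ∀ v ∈ B, G.dist y v + 1 = G.dist x v := by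
    intro v hv
    obtain ⟨w, hw⟩ := (hBm v).1 hv
    have hwx : x ∉ w.bypass.support := fun h =>
      (hw x (w.support_bypass_subset_support h)).2 rfl
    rw [dist_of_path hG.isAcyclic w.bypass w.bypass_isPath,
      dist_of_path hG.isAcyclic (Walk.cons hxy w.bypass)
        ((Walk.cons_isPath_iff _ _).2 ⟨w.bypass_isPath, hwx⟩)]
    simp
  have h2 : ∀ v ∈ C \ B, G.dist y v ≤ G.dist x v + 1 := by
    intro v _
    have h3 := hG.connected.dist_triangle (u := y) (v := x) (w := v)
    have h4 : G.dist y x = 1 := dist_eq_one_iff_adj.2 hxy.symm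
    omega
  have hm := hmin y ((hmem y).2 hayS)
  rw [← Finset.sum_sdiff hBC, ← Finset.sum_sdiff hBC] at hm
  have e1 : ∑ v ∈ B, (G.dist y v + 1) = ∑ v ∈ B, G.dist x v := Finset.sum_congr rfl h1
  have e2 := Finset.sum_le_sum h2
  simp only [Finset.sum_add_distrib, Finset.sum_const, smul_eq_mul, mul_one] at e1 e2
  have e3 := Finset.card_sdiff_add_card_eq_card hBC
  omega

lemma exists_ranking_s5 {V : Type*} [Fintype V] {G : SimpleGraph V} (hG : G.IsTree) (k : ℕ) :
    ∀ S : Set V, (∀ u ∈ S, (compIn G S u).ncard < 2 ^ k) →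
      ∃ c : V → ℕ, (∀ v ∈ S, c v < k) ∧ ∀ (u v : V) (p : G.Walk u v),
        (∀ x ∈ p.support, x ∈ S) →
          ∃ x ∈ p.support, ∀ y ∈ p.support, c y = c x → y = x := by
  classical
  induction k with
  | zero =>
    intro S hS
    have hE : ∀ u, u ∉ S := by
      intro u hu
      have h := hS u hu
      rw [pow_zero, Nat.lt_one_iff, Set.ncard_eq_zero] at h
      have : u ∈ compIn G S u := reachIn_refl hu
      rw [h] at this
      exact this
    exact ⟨fun _ => 0, fun v hv => absurd hv (hE v), fun u v p hp =>
      absurd (hp u p.start_mem_support) (hE u)⟩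
  | succ k ih =>
    intro S hS
    have hcen : ∀ D : Set V, ∃ x : V, (∃ a ∈ S, D = compIn G S a) →
        x ∈ D ∧ ∀ u ∈ D, u ≠ x → 2 * (compIn G (S \ {x}) u).ncard ≤ D.ncard := by
      intro D
      by_cases h : ∃ a ∈ S, D = compIn G S a
      · obtain ⟨a, ha, rfl⟩ := h
        obtain ⟨x, hx⟩ := exists_centroid_s5 hG S a ha
        exact ⟨x, fun _ => hx⟩
      · by_cases hV : Nonempty V
        · exact ⟨hV.some, fun h' => absurd h' h⟩
        · exact absurd hG.connected.nonempty hV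
    choose f hf using hcen
    set X : Set V := {x | ∃ a ∈ S, x = f (compIn G S a)} with hX
    have hfm : ∀ a ∈ S, f (compIn G S a) ∈ compIn G S a := fun a ha => (hf _ ⟨a, ha, rfl⟩).1
    obtain ⟨c, hc, hcp⟩ := ih (S \ X) (by
      intro u hu
      have h1 := (hf _ ⟨u, hu.1, rfl⟩).2 u (reachIn_refl hu.1)
        (fun h => hu.2 ⟨u, hu.1, h⟩)
      have h2 := hS u hu.1
      have h3 : (compIn G (S \ X) u).ncard ≤
          (compIn G (S \ {f (compIn G S u)}) u).ncard := by
        apply Set.ncard_le_ncard _ (Set.toFinite _)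
        intro v hv
        refine ReachIn.mono (Set.sdiff_subset_sdiff_right ?_) hv
        rintro _ rfl
        exact ⟨u, hu.1, rfl⟩
      rw [pow_succ] at h2
      omega)
    have hXu : ∀ u x, ReachIn G S u x → x ∈ X → x = f (compIn G S u) := by
      rintro u _ hux ⟨a, ha, rfl⟩
      rw [compIn_eq (ReachIn.trans hux (ReachIn.symm (hfm a ha)))]
    refine ⟨fun v => if v ∈ X then k else c v, ?_, ?_⟩
    · intro v hv
      by_cases h : v ∈ X
      · simp [h]
      · have := hc v ⟨hv, h⟩
        simp only [h, if_false]
        omega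
    · intro u v p hp
      by_cases h : ∃ x ∈ p.support, x ∈ X
      · obtain ⟨x, hxp, hx⟩ := h
        refine ⟨x, hxp, fun y hy hyx => ?_⟩
        have hyX : y ∈ X := by
          by_contra hyX
          have := hc y ⟨hp y hy, hyX⟩
          simp only [hx, hyX, if_true, if_false] at hyx
          omega
        rw [hXu u x (reachIn_of_walk p hp hxp) hx, hXu u y (reachIn_of_walk p hp hy) hyX]
      · push Not at h
        obtain ⟨x, hx, hxu⟩ := hcp u v p (fun x hx => ⟨hp x hx, h x hx⟩)
        refine ⟨x, hx, fun y hy hyx => hxu y hy ?_⟩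
        simpa [h x hx, h y hy] using hyx

lemma vcfc_le_of_lt {V : Type*} [Fintype V] {G : SimpleGraph V} (hG : G.IsTree) (k : ℕ)
    (hk : Fintype.card V < 2 ^ k) : vcfc G ≤ k := by
  classical
  obtain ⟨c, hc, hcp⟩ := exists_ranking_s5 hG k Set.univ (by
    intro u _
    refine lt_of_le_of_lt ?_ hk
    rw [← Nat.card_eq_fintype_card]
    exact Set.ncard_le_card _)
  refine Nat.sInf_le ⟨fun v => ⟨c v, hc v trivial⟩, fun u v _ => ?_⟩
  obtain ⟨p, hp⟩ := (hG.connected u v).exists_isPath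
  obtain ⟨x, hx, hxu⟩ := hcp u v p (fun _ _ => trivial)
  refine ⟨p, hp, ⟨c x, hc x trivial⟩, ?_⟩
  have h1 := List.count_eq_one_of_mem hp.support_nodup hx
  rw [List.count, List.countP_eq_length_filter] at h1
  rw [← h1]
  congr 1
  apply List.filter_congr
  intro y hy
  rw [Bool.eq_iff_iff]
  simp only [decide_eq_true_eq, Fin.mk.injEq, beq_iff_eq]
  exact ⟨hxu y hy, fun h => by rw [h]⟩

lemma three_half_pow (j : ℕ) : (3 / 2 : ℝ) ^ (j + 3) ≤ 2 ^ (j + 2) := by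
  induction j with
  | zero => norm_num
  | succ j ih =>
    have h : (0 : ℝ) ≤ 2 ^ (j + 2) := by positivity
    calc (3 / 2 : ℝ) ^ (j + 1 + 3) = (3 / 2) ^ (j + 3) * (3 / 2) := by ring
      _ ≤ 2 ^ (j + 2) * 2 := by nlinarith
      _ = 2 ^ (j + 1 + 2) := by ring

/-- For every tree `T` of order `n ≥ 3`, `vcfc(T) ≤ log n / log (3/2)`. -/
theorem vcfc_tree_le_log {V : Type*} [Fintype V] (T : SimpleGraph V) (hT : T.IsTree)
    (n : ℕ) (hn : Fintype.card V = n) (h3 : 3 ≤ n) :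
    (vcfc T : ℝ) ≤ Real.log n / Real.log (3 / 2) := by
  have hk := vcfc_le_of_lt hT (Nat.log 2 n + 1) (by
    rw [hn]; exact Nat.lt_pow_succ_log_self (by norm_num) n)
  have hpow : (3 / 2 : ℝ) ^ (Nat.log 2 n + 1) ≤ n := by
    have h2 : 2 ^ Nat.log 2 n ≤ n := Nat.pow_log_le_self 2 (by omega)
    have h2' : (2 : ℝ) ^ Nat.log 2 n ≤ n := by exact_mod_cast h2
    have h3' : (3 : ℝ) ≤ n := by exact_mod_cast h3
    rcases hl : Nat.log 2 n with _ | _ | j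
    · norm_num; linarith
    · norm_num; linarith
    · rw [hl] at h2'
      exact (three_half_pow j).trans h2'
  have hlog : 0 < Real.log (3 / 2) := Real.log_pos (by norm_num)
  rw [le_div_iff₀ hlog]
  have h4 := Real.log_le_log (by positivity) hpow
  rw [Real.log_pow] at h4
  have h5 : (vcfc T : ℝ) ≤ ((Nat.log 2 n + 1 : ℕ) : ℝ) := by exact_mod_cast hk
  exact (mul_le_mul_of_nonneg_right h5 hlog.le).trans h4
end

section
/- For every noncomplete 2-edge-connected simple graph G, cfc(G) = 2. -/
open SimpleGraph

/-- An edge coloring with `k` colors makes `G` conflict-free connected if any two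
distinct vertices are joined by a path on which some color is used on exactly one edge. -/
def IsCFCColoring {V : Type*} (G : SimpleGraph V) (k : ℕ) (c : Sym2 V → Fin k) : Prop :=
  ∀ u v : V, u ≠ v → ∃ p : G.Walk u v, p.IsPath ∧
    ∃ i : Fin k, (p.edges.filter (fun e => c e = i)).length = 1

/-- The conflict-free connection number: the least number of colors in a
conflict-free connected edge coloring. -/
noncomputable def cfcNum {V : Type*} (G : SimpleGraph V) : ℕ :=
  sInf {k | ∃ c : Sym2 V → Fin k, IsCFCColoring G k c}

namespace CFCProof

variable {V : Type*} {G : SimpleGraph V}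

/-- number of edges of color one -/
def cnt (f : Sym2 V → Fin 2) {u v : V} (p : G.Walk u v) : ℕ :=
  (p.edges.filter (fun e => f e = 1)).length

lemma cnt_append (f : Sym2 V → Fin 2) {u v w : V} (p : G.Walk u v) (q : G.Walk v w) :
    cnt f (p.append q) = cnt f p + cnt f q := by
  simp [cnt, Walk.edges_append]

lemma cnt_reverse (f : Sym2 V → Fin 2) {u v : V} (p : G.Walk u v) :
    cnt f p.reverse = cnt f p := by
  simp [cnt, Walk.edges_reverse]

lemma cnt_zero (f : Sym2 V → Fin 2) {u v : V} (p : G.Walk u v)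
    (h : ∀ e ∈ p.edges, f e ≠ 1) : cnt f p = 0 := by
  simp only [cnt, List.length_eq_zero_iff, List.filter_eq_nil_iff]
  intro e he
  simpa using h e he

lemma cnt_congr (f g : Sym2 V → Fin 2) {u v : V} (p : G.Walk u v)
    (h : ∀ e ∈ p.edges, f e = g e) : cnt f p = cnt g p := by
  unfold cnt
  congr 1
  apply List.filter_congr
  intro e he
  rw [h e he]

lemma path_append {u v w : V} {p : G.Walk u v} {q : G.Walk v w} (hp : p.IsPath) (hq : q.IsPath)
    (h : ∀ z ∈ p.support, z ∈ q.support → z = v) : (p.append q).IsPath := by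
  rw [Walk.isPath_def, Walk.support_append, List.nodup_append]
  have hq' := hq.support_nodup
  rw [← Walk.cons_tail_support, List.nodup_cons] at hq'
  refine ⟨hp.support_nodup, hq'.2, ?_⟩
  rintro z hz y hy rfl
  have := h z hz (List.mem_of_mem_tail hy)
  subst this
  exact hq'.1 hy

lemma path_append_inter {u v w : V} {p : G.Walk u v} {q : G.Walk v w}
    (h : (p.append q).IsPath) {z : V} (hz : z ∈ p.support) (hz' : z ∈ q.support) : z = v := by
  rw [Walk.isPath_def, Walk.support_append, List.nodup_append] at h
  rw [← Walk.cons_tail_support, List.mem_cons] at hz'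
  rcases hz' with rfl | hz'
  · rfl
  · exact absurd rfl (h.2.2 z hz z hz')

lemma first_hit {H : SimpleGraph V} (U : Set V) {w a : V} (p : H.Walk w a) (ha : a ∈ U) :
    ∃ b ∈ U, ∃ q : H.Walk w b, ∀ z ∈ q.support, z ∈ U → z = b := by
  induction p with
  | nil => exact ⟨_, ha, Walk.nil, by simp⟩
  | @cons u v w' h p ih =>
    by_cases hu : u ∈ U
    · exact ⟨u, hu, Walk.nil, by simp⟩
    · obtain ⟨b, hb, q, hq⟩ := ih ha
      refine ⟨b, hb, Walk.cons h q, ?_⟩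
      intro z hz hzU
      rw [Walk.support_cons, List.mem_cons] at hz
      rcases hz with rfl | hz
      · exact absurd hzU hu
      · exact hq z hz hzU

/-- `x` comes before `y` on `Q`. -/
def Before {w b : V} (Q : G.Walk w b) (x y : V) : Prop :=
  ∃ (A : G.Walk w x) (C : G.Walk y b), A.IsPath ∧ C.IsPath ∧
    (∀ z ∈ A.support, z ∈ Q.support) ∧ (∀ z ∈ C.support, z ∈ Q.support) ∧
    (∀ e ∈ A.edges, e ∈ Q.edges) ∧ (∀ e ∈ C.edges, e ∈ Q.edges) ∧
    (∀ z ∈ A.support, z ∉ C.support)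

lemma before_aux {w b x y : V} {A : G.Walk w x} {B : G.Walk x y} {C : G.Walk y b}
    (h : (A.append (B.append C)).IsPath) (hxy : x ≠ y) :
    Before (A.append (B.append C)) x y := by
  refine ⟨A, C, h.of_append_left, h.of_append_right.of_append_right, ?_, ?_, ?_, ?_, ?_⟩
  · intro z hz; simp [Walk.mem_support_append_iff, hz]
  · intro z hz; simp [Walk.mem_support_append_iff, hz]
  · intro z hz; simp [Walk.edges_append, hz]
  · intro z hz; simp [Walk.edges_append, hz]
  · intro z hz hz'
    have h1 : z = x := path_append_inter h hz (by simp [Walk.mem_support_append_iff, hz'])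
    subst h1
    exact hxy (path_append_inter h.of_append_right (Walk.start_mem_support _) hz')

lemma before_or {w b x y : V} {Q : G.Walk w b} (hQ : Q.IsPath) (hx : x ∈ Q.support)
    (hy : y ∈ Q.support) (hxy : x ≠ y) : Before Q x y ∨ Before Q y x := by
  obtain ⟨A, D, rfl⟩ := Walk.mem_support_iff_exists_append.mp hx
  rw [Walk.mem_support_append_iff] at hy
  rcases hy with hy | hy
  · right
    obtain ⟨A', B, rfl⟩ := Walk.mem_support_iff_exists_append.mp hy
    rw [← Walk.append_assoc] at hQ ⊢
    exact before_aux hQ hxy.symm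
  · left
    obtain ⟨B, C, rfl⟩ := Walk.mem_support_iff_exists_append.mp hy
    exact before_aux hQ hxy

def Conn (G : SimpleGraph V) (U : Set V) (f : Sym2 V → Fin 2) (x y : V) : Prop :=
  ∃ p : G.Walk x y, p.IsPath ∧ (∀ z ∈ p.support, z ∈ U) ∧ cnt f p = 1

lemma Conn.symm {U : Set V} {f : Sym2 V → Fin 2} {x y : V} (h : Conn G U f x y) :
    Conn G U f y x := by
  obtain ⟨p, hp, hU, hc⟩ := h
  exact ⟨p.reverse, hp.reverse, by simpa using hU, by rw [cnt_reverse, hc]⟩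

def Inv (G : SimpleGraph V) (U : Set V) (f : Sym2 V → Fin 2) : Prop :=
  (∀ e, f e = 1 → ∀ v ∈ e, v ∈ U) ∧ ∀ x ∈ U, ∀ y ∈ U, x ≠ y → Conn G U f x y

lemma ear (U : Set V) (f : Sym2 V → Fin 2) (hf : Inv G U f)
    {a w b : V} (ha : a ∈ U) (hw : w ∉ U) (hb : b ∈ U) (haw : G.Adj w a)
    (Q : G.Walk w b) (hQ : Q.IsPath) (hQU : ∀ z ∈ Q.support, z ∈ U → z = b)
    (he : s(w, a) ∉ Q.edges) :
    ∃ f', Inv G (U ∪ {z | z ∈ Q.support}) f' := by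
  classical
  have hQf : ∀ e ∈ Q.edges, f e ≠ 1 := by
    intro e heQ h1
    have hin := hf.1 e h1
    induction e with
    | h u v =>
      have h1 := hQU u (Q.fst_mem_support_of_mem_edges heQ) (hin u (by simp))
      have h2 := hQU v (Q.snd_mem_support_of_mem_edges heQ) (hin v (by simp))
      exact (Q.adj_of_mem_edges heQ).ne (h1.trans h2.symm)
  -- choice of the new coloring and the middle path
  obtain ⟨f', hf'U, hf'eq, hf'Q, M, hM, hMU, hMc⟩ : ∃ f' : Sym2 V → Fin 2,
      (∀ e, f' e = 1 → ∀ v ∈ e, v ∈ U ∪ {z | z ∈ Q.support}) ∧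
      (∀ e, (∀ v ∈ e, v ∈ U) → f' e = f e) ∧ (∀ e ∈ Q.edges, f' e ≠ 1) ∧
      ∃ M : G.Walk a b, M.IsPath ∧ (∀ z ∈ M.support, z ∈ U) ∧
        cnt f' (Walk.cons haw M) = 1 := by
    by_cases hab : a = b
    · subst hab
      refine ⟨Function.update f s(w, a) 1, ?_, ?_, ?_, Walk.nil, by simp, by simpa using ha, ?_⟩
      · intro e h1 v hv
        by_cases h : e = s(w, a)
        · subst h
          rcases Sym2.mem_iff.mp hv with rfl | rfl
          · exact Or.inr Q.start_mem_support
          · exact Or.inl ha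
        · rw [Function.update_of_ne h] at h1
          exact Or.inl (hf.1 e h1 v hv)
      · intro e hv
        have h : e ≠ s(w, a) := by
          rintro rfl
          exact hw (hv w (by simp))
        rw [Function.update_of_ne h]
      · intro e heQ
        have h : e ≠ s(w, a) := by
          rintro rfl
          exact he heQ
        rw [Function.update_of_ne h]
        exact hQf e heQ
      · simp [cnt]
    · obtain ⟨M, hM, hMU, hMc⟩ := hf.2 a ha b hb hab
      refine ⟨f, fun e h v hv => Or.inl (hf.1 e h v hv), fun _ _ => rfl, hQf, M, hM, hMU, ?_⟩
      have : f s(w, a) ≠ 1 := fun h => hw (hf.1 _ h w (by simp))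
      simpa [cnt, this] using hMc
  have old : ∀ x ∈ U, ∀ y ∈ U, x ≠ y →
      ∃ p : G.Walk x y, p.IsPath ∧ (∀ z ∈ p.support, z ∈ U) ∧ cnt f' p = 1 := by
    intro x hx y hy hxy
    obtain ⟨p, hp, hpU, hpc⟩ := hf.2 x hx y hy hxy
    refine ⟨p, hp, hpU, ?_⟩
    rw [← hpc]
    apply cnt_congr
    intro e hep
    apply hf'eq
    intro v hv
    exact hpU v (Walk.mem_support_of_mem_edges hep hv)
  -- before
  have bef : ∀ x y, x ∉ U → Before Q x y →
      Conn G (U ∪ {z | z ∈ Q.support}) f' x y := by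
    rintro x y hxU ⟨A, C, hA, hC, hAQ, hCQ, hAe, hCe, hd⟩
    have hA' : ∀ z ∈ A.support, z ∉ U := by
      intro z hz hzU
      have := hQU z (hAQ z hz) hzU
      subst this
      exact hd z hz C.end_mem_support
    have hMC : (M.append C.reverse).IsPath := by
      apply path_append hM hC.reverse
      intro z hz hz'
      rw [Walk.support_reverse, List.mem_reverse] at hz'
      exact hQU z (hCQ z hz') (hMU z hz)
    have hR : (Walk.cons haw (M.append C.reverse)).IsPath := by
      rw [Walk.cons_isPath_iff]
      refine ⟨hMC, ?_⟩
      rw [Walk.mem_support_append_iff, Walk.support_reverse, List.mem_reverse]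
      rintro (h | h)
      · exact hw (hMU w h)
      · exact hd w A.start_mem_support h
    refine ⟨A.reverse.append (Walk.cons haw (M.append C.reverse)), ?_, ?_, ?_⟩
    · apply path_append hA.reverse hR
      intro z hz hz'
      rw [Walk.support_reverse, List.mem_reverse] at hz
      rw [Walk.support_cons, List.mem_cons, Walk.mem_support_append_iff, Walk.support_reverse,
        List.mem_reverse] at hz'
      rcases hz' with h | h | h
      · exact h
      · exact absurd (hMU z h) (hA' z hz)
      · exact absurd h (hd z hz)
    · intro z hz
      simp only [Walk.mem_support_append_iff, Walk.support_cons, List.mem_cons,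
        Walk.support_reverse, List.mem_reverse] at hz
      rcases hz with h | h | h | h
      · exact Or.inr (hAQ z h)
      · subst h; exact Or.inr Q.start_mem_support
      · exact Or.inl (hMU z h)
      · exact Or.inr (hCQ z h)
    · rw [← Walk.cons_append, cnt_append, cnt_append, cnt_reverse, cnt_reverse, hMc,
        cnt_zero f' A (fun e h => hf'Q e (hAe e h)), cnt_zero f' C (fun e h => hf'Q e (hCe e h))]
  have mixed : ∀ x y, x ∈ Q.support → x ∉ U → y ∈ U →
      Conn G (U ∪ {z | z ∈ Q.support}) f' x y := by
    intro x y hx hxU hy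
    by_cases hyb : y = b
    · subst hyb
      refine bef x y hxU ?_
      have hxy : x ≠ y := by rintro rfl; exact hxU hy
      obtain ⟨A, B, rfl⟩ := Walk.mem_support_iff_exists_append.mp hx
      have := before_aux (A := A) (B := B) (C := Walk.nil) (by simpa using hQ) hxy
      simpa using this
    · obtain ⟨A, B, rfl⟩ := Walk.mem_support_iff_exists_append.mp hx
      obtain ⟨p, hp, hpU, hpc⟩ := old b hb y hy (Ne.symm hyb)
      refine ⟨B.append p, ?_, ?_, ?_⟩
      · apply path_append hQ.of_append_right hp
        intro z hz hz'
        exact hQU z (by simp [Walk.mem_support_append_iff, hz]) (hpU z hz')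
      · intro z hz
        rw [Walk.mem_support_append_iff] at hz
        rcases hz with hz | hz
        · exact Or.inr (by simp [Walk.mem_support_append_iff, hz])
        · exact Or.inl (hpU z hz)
      · rw [cnt_append, hpc, cnt_zero f' B]
        intro e h
        exact hf'Q e (by simp [Walk.edges_append, h])
  refine ⟨f', hf'U, ?_⟩
  intro x hx y hy hxy
  by_cases hxU : x ∈ U <;> by_cases hyU : y ∈ U
  · obtain ⟨p, hp, hpU, hpc⟩ := old x hxU y hyU hxy
    exact ⟨p, hp, fun z hz => Or.inl (hpU z hz), hpc⟩
  · exact (mixed y x (hy.resolve_left hyU) hyU hxU).symm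
  · exact mixed x y (hx.resolve_left hxU) hxU hyU
  · rcases before_or hQ (hx.resolve_left hxU) (hy.resolve_left hyU) hxy with h | h
    · exact bef x y hxU h
    · exact (bef y x hyU h).symm

lemma exists_univ [Finite V] (hG : G.Connected)
    (h2econn : ∀ e ∈ G.edgeSet, (G.deleteEdges {e}).Connected) :
    ∃ f, Inv G Set.univ f := by
  classical
  obtain ⟨v0⟩ := hG.nonempty
  have h0 : ({v0} : Set V) ∈ {U : Set V | U.Nonempty ∧ ∃ f, Inv G U f} := by
    refine ⟨⟨v0, rfl⟩, fun _ => 0, ?_, ?_⟩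
    · intro e h; simp at h
    · rintro x rfl y rfl h; exact absurd rfl h
  obtain ⟨U, ⟨⟨⟨u, hu⟩, f, hf⟩, hmax⟩⟩ := (Set.toFinite _).exists_maximal ⟨_, h0⟩
  suffices h : U = Set.univ by
    subst h; exact ⟨f, hf⟩
  by_contra hne
  obtain ⟨v, hv⟩ := (Set.ne_univ_iff_exists_notMem U).mp hne
  obtain ⟨p⟩ := hG.preconnected u v
  obtain ⟨d, -, ha, hw⟩ := p.exists_boundary_dart U hu hv
  have haw : G.Adj d.snd d.fst := d.adj.symm
  obtain ⟨q⟩ := (h2econn s(d.snd, d.fst) haw).preconnected d.snd d.fst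
  obtain ⟨b, hb, q', hq'⟩ := first_hit U q ha
  have hle : G.deleteEdges {s(d.snd, d.fst)} ≤ G := G.deleteEdges_le _
  have hdel : s(d.snd, d.fst) ∉ q'.bypass.edges := by
    intro h
    have := Walk.edges_subset_edgeSet _ h
    simp at this
  obtain ⟨f', hf'⟩ := ear U f hf ha hw hb haw (q'.bypass.mapLe hle)
    ((Walk.isPath_mapLe hle).mpr q'.bypass_isPath)
    (by
      intro z hz
      rw [Walk.support_mapLe_eq_support] at hz
      exact hq' z (q'.support_bypass_subset_support hz))
    (by rwa [Walk.edges_mapLe_eq_edges])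
  have := hmax (y := _) ⟨⟨u, Or.inl hu⟩, f', hf'⟩ Set.subset_union_left
  exact hw (this (Or.inr (Walk.start_mem_support _)))

end CFCProof

/-- Every noncomplete 2-edge-connected graph `G` satisfies `cfc(G) = 2`. -/
theorem cfc_two_edge_connected {V : Type*} [Fintype V] (G : SimpleGraph V)
    (hG : G.Connected) (h2 : 2 ≤ Fintype.card V)
    (h2econn : ∀ e ∈ G.edgeSet, (G.deleteEdges {e}).Connected)
    (hnc : G ≠ ⊤) :
    cfcNum G = 2 := by
  have hmem : 2 ∈ {k | ∃ c : Sym2 V → Fin k, IsCFCColoring G k c} := by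
    obtain ⟨f, hf⟩ := CFCProof.exists_univ hG h2econn
    refine ⟨f, fun u v huv => ?_⟩
    obtain ⟨p, hp, -, hc⟩ := hf.2 u trivial v trivial huv
    exact ⟨p, hp, 1, hc⟩
  apply le_antisymm (Nat.sInf_le hmem)
  apply le_csInf ⟨2, hmem⟩
  rintro k ⟨c, hc⟩
  by_contra hk
  have hk' : k ≤ 1 := by omega
  have hsub : Subsingleton (Fin k) := Fin.subsingleton_iff_le_one.mpr hk'
  apply hnc
  ext u v
  rw [top_adj]
  refine ⟨fun h => h.ne, fun huv => ?_⟩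
  obtain ⟨p, -, i, hi⟩ := hc u v huv
  rw [List.filter_eq_self.mpr (fun e _ => by simpa using Subsingleton.elim _ _),
    Walk.length_edges] at hi
  exact Walk.adj_of_length_eq_one hi
end

section
/- For every integer n ≥ 2, the path P_n on n vertices satisfies cfc(P_n) = ⌈log₂ n⌉. -/
open SimpleGraph

/-- Parity invariant: number of edges of color `i` below the vertex `v`. -/
noncomputable def prefParity {n k : ℕ} (c : Sym2 (Fin n) → Fin k) (i : Fin k) (v : ℕ) : ZMod 2 :=
  ∑ j ∈ Finset.range v,
    if h : j + 1 < n then (if c s(⟨j, by omega⟩, ⟨j + 1, h⟩) = i then 1 else 0) else 0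

lemma prefParity_step {n k : ℕ} (c : Sym2 (Fin n) → Fin k) (i : Fin k) (u v : Fin n)
    (h : u.val + 1 = v.val) :
    prefParity c i v.val = prefParity c i u.val + if c s(u, v) = i then 1 else 0 := by
  obtain ⟨u, hu⟩ := u
  obtain ⟨v, hv⟩ := v
  simp only at h
  subst h
  simp [prefParity, Finset.sum_range_succ, hv]

lemma walk_parity {n k : ℕ} (c : Sym2 (Fin n) → Fin k) (i : Fin k) {u v : Fin n}
    (p : (SimpleGraph.pathGraph n).Walk u v) :
    (((p.edges.filter (fun e => c e = i)).length : ℕ) : ZMod 2)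
      = prefParity c i u.val + prefParity c i v.val := by
  have two : ∀ x : ZMod 2, x + x = 0 := by decide
  induction p with
  | nil => simp [two]
  | @cons u v w h p ih =>
    have key : (if c s(u, v) = i then (1 : ZMod 2) else 0)
        = prefParity c i u.val + prefParity c i v.val := by
      rcases SimpleGraph.pathGraph_adj.1 h with h | h
      · rw [prefParity_step c i u v h, ← add_assoc, two, zero_add]
      · rw [prefParity_step c i v u h, Sym2.eq_swap, add_right_comm, two, zero_add]
    have e : (((((SimpleGraph.Walk.cons h p).edges).filter (fun e => c e = i)).length : ℕ) : ZMod 2)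
        = (if c s(u, v) = i then (1 : ZMod 2) else 0)
          + (((p.edges.filter (fun e => c e = i)).length : ℕ) : ZMod 2) := by
      rw [SimpleGraph.Walk.edges_cons, List.filter_cons]
      by_cases hc : c s(u, v) = i
      · simp [hc, add_comm]
      · simp [hc]
    rw [e, ih, key]
    have h3 : ∀ a b c : ZMod 2, a + b + (b + c) = a + c := by decide
    exact h3 _ _ _

lemma cfc_lower {n k : ℕ} (c : Sym2 (Fin n) → Fin k)
    (hc : IsCFCColoring (SimpleGraph.pathGraph n) k c) : n ≤ 2 ^ k := by
  have two : ∀ x : ZMod 2, x + x = 0 := by decide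
  have inj : Function.Injective
      (fun (v : Fin n) => fun i : Fin k => prefParity c i v.val) := by
    intro u v huv
    by_contra hne
    obtain ⟨p, -, i, hi⟩ := hc u v hne
    have h := walk_parity c i p
    have h' : prefParity c i u.val = prefParity c i v.val := congrFun huv i
    rw [hi, h', two] at h
    exact absurd h (by decide)
  have := Fintype.card_le_of_injective _ inj
  simpa [ZMod.card] using this

/-- The larger endpoint of an edge. -/
def topEnd {n : ℕ} (e : Sym2 (Fin n)) : ℕ := (Sym2.sup e).val

lemma exists_walk {n : ℕ} (d : ℕ) : ∀ u v : Fin n, u.val + d = v.val →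
    ∃ p : (SimpleGraph.pathGraph n).Walk u v, p.IsPath ∧ (∀ x ∈ p.support, u ≤ x) ∧
      p.edges.map topEnd = List.range' (u.val + 1) d := by
  induction d with
  | zero =>
    intro u v h
    obtain rfl : u = v := Fin.ext (by simpa using h)
    exact ⟨SimpleGraph.Walk.nil, by simp, by simp, by simp⟩
  | succ d ih =>
    intro u v h
    have hv := v.isLt
    let w : Fin n := ⟨u.val + 1, by omega⟩
    obtain ⟨p, hp, hs, he⟩ := ih w v (by simp only [w]; omega)
    have hadj : (SimpleGraph.pathGraph n).Adj u w := SimpleGraph.pathGraph_adj.2 (Or.inl rfl)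
    have huw : u < w := by simp [w, Fin.lt_def]
    refine ⟨SimpleGraph.Walk.cons hadj p, ?_, ?_, ?_⟩
    · rw [SimpleGraph.Walk.cons_isPath_iff]
      exact ⟨hp, fun hu => absurd (hs u hu) (not_le.2 huw)⟩
    · intro x hx
      rw [SimpleGraph.Walk.support_cons, List.mem_cons] at hx
      rcases hx with rfl | hx
      · exact le_rfl
      · exact huw.le.trans (hs x hx)
    · rw [SimpleGraph.Walk.edges_cons, List.map_cons, he, List.range'_succ]
      congr 1
      simp [topEnd, sup_eq_right.2 huw.le, w]

lemma val_between {a b m : ℕ} (ha : 0 < a) (hab : a < b) (h1 : padicValNat 2 a = m)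
    (h2 : padicValNat 2 b = m) : ∃ x, a < x ∧ x < b ∧ m < padicValNat 2 x := by
  have : Fact (Nat.Prime 2) := ⟨Nat.prime_two⟩
  have da : 2 ^ m ∣ a := h1 ▸ pow_padicValNat_dvd
  have db : 2 ^ m ∣ b := h2 ▸ pow_padicValNat_dvd
  have na : ¬ 2 ^ (m + 1) ∣ a := h1 ▸ pow_succ_padicValNat_not_dvd ha.ne'
  have nb : ¬ 2 ^ (m + 1) ∣ b := h2 ▸ pow_succ_padicValNat_not_dvd (by omega)
  obtain ⟨s, rfl⟩ := da
  obtain ⟨t, rfl⟩ := db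
  have pos : 0 < 2 ^ m := by positivity
  have os : ¬ 2 ∣ s := fun h => na (by rw [pow_succ]; exact Nat.mul_dvd_mul_left _ h)
  have ot : ¬ 2 ∣ t := fun h => nb (by rw [pow_succ]; exact Nat.mul_dvd_mul_left _ h)
  have hst : s < t := Nat.lt_of_mul_lt_mul_left hab
  refine ⟨2 ^ m * (s + 1), ?_, ?_, ?_⟩
  · exact Nat.mul_lt_mul_of_pos_left (by omega) pos
  · exact Nat.mul_lt_mul_of_pos_left (by omega) pos
  · have : 2 ^ (m + 1) ∣ 2 ^ m * (s + 1) := by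
      rw [pow_succ]; exact Nat.mul_dvd_mul_left _ (by omega)
    exact (padicValNat_dvd_iff_le (by positivity)).1 this

lemma range_unique (u d : ℕ) (hd : 0 < d) : ∃ j, j ∈ List.range' (u + 1) d ∧
    ((List.range' (u + 1) d).filter
      (fun x => padicValNat 2 x = padicValNat 2 j)).length = 1 := by
  obtain ⟨j, hj, hmax⟩ := Finset.exists_max_image (List.range' (u + 1) d).toFinset (padicValNat 2)
    ⟨u + 1, by simp [List.mem_range'_1, hd]⟩
  simp only [List.mem_toFinset] at hj hmax
  refine ⟨j, hj, ?_⟩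
  have : ((List.range' (u + 1) d).filter
      (fun x => padicValNat 2 x = padicValNat 2 j)).Perm [j] := by
    rw [List.perm_ext_iff_of_nodup (List.Nodup.filter _ List.nodup_range') (List.nodup_singleton _)]
    intro x
    simp only [List.mem_filter, decide_eq_true_eq, List.mem_singleton]
    constructor
    · rintro ⟨hx, hxj⟩
      by_contra hne
      rw [List.mem_range'_1] at hx hj
      rcases lt_or_gt_of_ne hne with hlt | hlt
      · obtain ⟨y, h1, h2, h3⟩ := val_between (by omega) hlt hxj rfl
        have := hmax y (by rw [List.mem_range'_1]; omega)
        omega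
      · obtain ⟨y, h1, h2, h3⟩ := val_between (by omega) hlt rfl hxj
        have := hmax y (by rw [List.mem_range'_1]; omega)
        omega
    · rintro rfl
      exact ⟨hj, rfl⟩
  simpa using this.length_eq

lemma val_lt {n : ℕ} (h2 : 2 ≤ n) (x : ℕ) (hx : x < n) : padicValNat 2 x < Nat.clog 2 n := by
  rcases Nat.eq_zero_or_pos x with rfl | hpos
  · simpa using Nat.clog_pos (by norm_num) h2
  · have h1 : 2 ^ padicValNat 2 x ≤ x := Nat.le_of_dvd hpos pow_padicValNat_dvd
    have h3 : n ≤ 2 ^ Nat.clog 2 n := Nat.le_pow_clog (by norm_num) n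
    exact (Nat.pow_lt_pow_iff_right (by norm_num : 1 < 2)).1 (by omega)

lemma cfc_upper {n : ℕ} (h2 : 2 ≤ n) : ∃ c : Sym2 (Fin n) → Fin (Nat.clog 2 n),
    IsCFCColoring (SimpleGraph.pathGraph n) (Nat.clog 2 n) c := by
  let c : Sym2 (Fin n) → Fin (Nat.clog 2 n) :=
    fun e => ⟨padicValNat 2 (topEnd e), val_lt h2 _ (Sym2.sup e).isLt⟩
  have main : ∀ u v : Fin n, u < v → ∃ p : (SimpleGraph.pathGraph n).Walk u v, p.IsPath ∧
      ∃ i, (p.edges.filter (fun e => c e = i)).length = 1 := by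
    intro u v huv
    have huv' : u.val < v.val := huv
    have hv := v.isLt
    obtain ⟨p, hp, -, he⟩ := exists_walk (v.val - u.val) u v (by omega)
    obtain ⟨j, hj, hl⟩ := range_unique u.val (v.val - u.val) (by omega)
    rw [List.mem_range'_1] at hj
    refine ⟨p, hp, ⟨padicValNat 2 j, val_lt h2 j (by omega)⟩, ?_⟩
    rw [← he, List.filter_map, List.length_map] at hl
    rw [← hl]
    congr 2
    funext e
    simp [c]
  refine ⟨c, fun u v hne => ?_⟩
  rcases lt_or_gt_of_ne hne with h | h
  · exact main u v h
  · obtain ⟨p, hp, i, hi⟩ := main v u h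
    refine ⟨p.reverse, hp.reverse, i, ?_⟩
    rw [SimpleGraph.Walk.edges_reverse, List.filter_reverse, List.length_reverse, hi]

/-- For every `n ≥ 2`, the path on `n` vertices satisfies `cfc(Pₙ) = ⌈log₂ n⌉`. -/
theorem cfc_pathGraph (n : ℕ) (h2 : 2 ≤ n) :
    cfcNum (SimpleGraph.pathGraph n) = Nat.clog 2 n := by
  unfold cfcNum
  apply le_antisymm
  · exact Nat.sInf_le (cfc_upper h2)
  · refine le_csInf ?_ ?_
    · exact ⟨Nat.clog 2 n, cfc_upper h2⟩
    rintro k ⟨c, hc⟩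
    exact Nat.clog_le_of_le_pow (cfc_lower c hc)
end

section
/- Let G be a nontrivial connected simple graph of order n. Then 1 ≤ cfc(G) ≤ n−1; moreover cfc(G) = 1 if and only if G is the complete graph K_n, and cfc(G) = n−1 if and only if G is the star K_{1,n-1}. -/
open SimpleGraph

/-- Natural-number coloring with colors below `k`, conflict-free connecting `S`. -/
def GoodCFC {V : Type*} (G : SimpleGraph V) (S : Finset V) (k : ℕ) : Prop :=
  ∃ c : Sym2 V → ℕ, (∀ e, c e < k) ∧ ∀ u ∈ S, ∀ v ∈ S, u ≠ v → ∃ p : G.Walk u v, p.IsPath ∧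
    (∀ x ∈ p.support, x ∈ S) ∧ ∃ i : ℕ, (p.edges.filter (fun e => c e = i)).length = 1

theorem filter_length_congr {V : Type*} (l : List (Sym2 V)) (c c' : Sym2 V → ℕ) (i : ℕ)
    (h : ∀ e ∈ l, c e = c' e) :
    (l.filter (fun e => c e = i)).length = (l.filter (fun e => c' e = i)).length := by
  congr 1
  apply List.filter_congr
  intro e he
  rw [h e he]

theorem filter_length_zero {V : Type*} (l : List (Sym2 V)) (c : Sym2 V → ℕ) (i : ℕ)
    (h : ∀ e ∈ l, c e ≠ i) :
    (l.filter (fun e => c e = i)).length = 0 := by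
  rw [List.length_eq_zero_iff, List.filter_eq_nil_iff]
  intro e he
  simpa using h e he

theorem GoodCFC.insert {V : Type*} [DecidableEq V] {G : SimpleGraph V} {S : Finset V} {k : ℕ}
    (h : GoodCFC G S k) {x w : V} (hx : x ∉ S) (hw : w ∈ S) (hxw : G.Adj x w) :
    GoodCFC G (insert x S) (k + 1) := by
  obtain ⟨c, hc, hp⟩ := h
  have key : ∀ u ∈ S, ∃ p : G.Walk x u, p.IsPath ∧
    (∀ y ∈ p.support, y ∈ Insert.insert x S) ∧
    (p.edges.filter (fun e => (if x ∈ e then k else c e) = k)).length = 1 := by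
    intro u hu
    have : ∃ q : G.Walk w u, q.IsPath ∧ (∀ y ∈ q.support, y ∈ S) := by
      by_cases hwu : w = u
      · subst hwu
        exact ⟨Walk.nil, by simp, by simpa using hw⟩
      · obtain ⟨q, h1, h2, _⟩ := hp w hw u hu hwu
        exact ⟨q, h1, h2⟩
    obtain ⟨q, hq, hqs⟩ := this
    refine ⟨Walk.cons hxw q, ?_, ?_, ?_⟩
    · rw [Walk.cons_isPath_iff]
      exact ⟨hq, fun h => hx (hqs x h)⟩
    · intro y hy
      rw [Walk.support_cons, List.mem_cons] at hy
      rcases hy with rfl | hy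
      · simp
      · exact Finset.mem_insert_of_mem (hqs y hy)
    · rw [Walk.edges_cons, List.filter_cons]
      simp only [Sym2.mem_iff, true_or, if_true, decide_true, List.length_cons, Nat.add_eq_right]
      apply filter_length_zero q.edges (fun e => if x ∈ e then k else c e)
      intro e he
      have : x ∉ e := fun hxe => hx (hqs x (Walk.mem_support_of_mem_edges he hxe))
      simp only [this, if_false]
      exact (hc e).ne
  refine ⟨fun e => if x ∈ e then k else c e, ?_, ?_⟩
  · intro e
    have := hc e
    dsimp only
    split_ifs <;> omega
  · intro u hu v hv huv
    rw [Finset.mem_insert] at hu hv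
    rcases hu with rfl | hu
    · rcases hv with rfl | hv
      · exact absurd rfl huv
      · obtain ⟨p, h1, h2, h3⟩ := key v hv
        exact ⟨p, h1, h2, k, h3⟩
    · rcases hv with rfl | hv
      · obtain ⟨p, h1, h2, h3⟩ := key u hu
        refine ⟨p.reverse, h1.reverse, by simpa using h2, k, ?_⟩
        rw [Walk.edges_reverse, List.filter_reverse, List.length_reverse]
        exact h3
      · obtain ⟨p, h1, h2, i, h3⟩ := hp u hu v hv huv
        refine ⟨p, h1, fun y hy => Finset.mem_insert_of_mem (h2 y hy), i, ?_⟩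
        rw [← h3]
        apply filter_length_congr p.edges (fun e => if x ∈ e then k else c e)
        intro e he
        have : x ∉ e := fun hxe => hx (h2 x (Walk.mem_support_of_mem_edges he hxe))
        simp only [this, if_false]

/-- A set closed under adjacency in a connected graph is everything. -/
theorem closed_univ {V : Type*} {G : SimpleGraph V} (hG : G.Connected) (P : V → Prop) (a : V)
    (ha : P a) (h : ∀ x y, P x → G.Adj x y → P y) (b : V) : P b := by
  obtain ⟨p⟩ := hG.preconnected a b
  induction p with
  | nil => exact ha
  | cons hh q ih => exact ih (h _ _ ha hh)

theorem GoodCFC.grow {V : Type*} [Fintype V] [DecidableEq V] {G : SimpleGraph V}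
    (hG : G.Connected) (m : ℕ) : ∀ {S : Finset V} {k : ℕ}, S.Nonempty → GoodCFC G S k →
    S.card + m = Fintype.card V → GoodCFC G Finset.univ (k + m) := by
  induction m with
  | zero =>
    intro S k _ h hc
    have : S = Finset.univ := by rw [← Finset.card_eq_iff_eq_univ]; omega
    subst this; exact h
  | succ m ih =>
    intro S k hS h hc
    obtain ⟨a, ha⟩ := hS
    have : ∃ x w, x ∉ S ∧ w ∈ S ∧ G.Adj x w := by
      by_contra hcon
      push Not at hcon
      have hall := closed_univ hG (fun x => x ∈ S) a ha
        (fun x y hx hxy => by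
          by_contra hy
          exact hcon y x hy hx hxy.symm)
      have : S = Finset.univ := by ext; simp [hall]
      rw [this, Finset.card_univ] at hc
      omega
    obtain ⟨x, w, hx, hw, hxw⟩ := this
    have := ih (Finset.insert_nonempty x S) (h.insert hx hw hxw)
      (by rw [Finset.card_insert_of_notMem hx]; omega)
    rwa [show k + (m + 1) = k + 1 + m by ring]

theorem GoodCFC.le {V : Type*} [Fintype V] {G : SimpleGraph V} {k : ℕ}
    (h : GoodCFC G Finset.univ k) : cfcNum G ≤ k := by
  apply Nat.sInf_le
  obtain ⟨c, hc, hp⟩ := h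
  refine ⟨fun e => ⟨c e, hc e⟩, ?_⟩
  intro u v huv
  obtain ⟨p, h1, _, i, h3⟩ := hp u (Finset.mem_univ _) v (Finset.mem_univ _) huv
  have hi : i < k := by
    by_contra hi
    rw [filter_length_zero p.edges c i (fun e _ => by have := hc e; omega)] at h3
    omega
  refine ⟨p, h1, ⟨i, hi⟩, ?_⟩
  simpa only [Fin.mk.injEq] using h3

theorem good_edge {V : Type*} [DecidableEq V] {G : SimpleGraph V} {a b : V} (h : G.Adj a b) :
    GoodCFC G {a, b} 1 := by
  refine ⟨fun _ => 0, by simp, ?_⟩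
  intro u hu v hv huv
  have huv' : G.Adj u v := by
    simp only [Finset.mem_insert, Finset.mem_singleton] at hu hv
    rcases hu with rfl | rfl <;> rcases hv with rfl | rfl
    · exact absurd rfl huv
    · exact h
    · exact h.symm
    · exact absurd rfl huv
  refine ⟨Walk.cons huv' Walk.nil, by simp [huv], ?_, 0, by simp⟩
  intro x hx
  simp only [Walk.support_cons, Walk.support_nil, List.mem_cons, List.not_mem_nil, or_false] at hx
  rcases hx with rfl | rfl <;> assumption

theorem good_P4 {V : Type*} [DecidableEq V] {G : SimpleGraph V} {a b c d : V}
    (hab : G.Adj a b) (hbc : G.Adj b c) (hcd : G.Adj c d) (hac : a ≠ c) (had : a ≠ d)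
    (hbd : b ≠ d) : GoodCFC G {a, b, c, d} 2 := by
  have h1 := hab.ne
  have h2 := hbc.ne
  have h3 := hcd.ne
  refine ⟨fun e => if e = s(b, c) then 1 else 0, fun e => by dsimp only; split_ifs <;> omega, ?_⟩
  have R : ∀ u v : V, (∃ p : G.Walk u v, p.IsPath ∧
    (∀ x ∈ p.support, x ∈ ({a, b, c, d} : Finset V)) ∧ ∃ i : ℕ,
      (p.edges.filter (fun e => (if e = s(b, c) then 1 else 0) = i)).length = 1) →
      (∃ p : G.Walk v u, p.IsPath ∧
    (∀ x ∈ p.support, x ∈ ({a, b, c, d} : Finset V)) ∧ ∃ i : ℕ,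
      (p.edges.filter (fun e => (if e = s(b, c) then 1 else 0) = i)).length = 1) := by
    rintro u v ⟨p, h1, h2, k, h3⟩
    refine ⟨p.reverse, h1.reverse, by simpa using h2, k, ?_⟩
    rw [Walk.edges_reverse, List.filter_reverse, List.length_reverse]
    exact h3
  have eab : s(a, b) ≠ s(b, c) := by simp; tauto
  have ecd : s(c, d) ≠ s(b, c) := by simp; grind
  have Pab := (⟨Walk.cons hab Walk.nil, by simp [*], by simp, 0, by simp [List.filter_cons, eab]⟩ :
     ∃ p : G.Walk a b, p.IsPath ∧
    (∀ x ∈ p.support, x ∈ ({a, b, c, d} : Finset V)) ∧ ∃ i : ℕ,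
      (p.edges.filter (fun e => (if e = s(b, c) then 1 else 0) = i)).length = 1)
  have Pbc := (⟨Walk.cons hbc Walk.nil, by simp [*], by simp, 1, by simp [List.filter_cons]⟩ :
     ∃ p : G.Walk b c, p.IsPath ∧
    (∀ x ∈ p.support, x ∈ ({a, b, c, d} : Finset V)) ∧ ∃ i : ℕ,
      (p.edges.filter (fun e => (if e = s(b, c) then 1 else 0) = i)).length = 1)
  have Pcd := (⟨Walk.cons hcd Walk.nil, by simp [*], by simp, 0, by simp [List.filter_cons, ecd]⟩ :
     ∃ p : G.Walk c d, p.IsPath ∧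
    (∀ x ∈ p.support, x ∈ ({a, b, c, d} : Finset V)) ∧ ∃ i : ℕ,
      (p.edges.filter (fun e => (if e = s(b, c) then 1 else 0) = i)).length = 1)
  have Pac := (⟨Walk.cons hab (Walk.cons hbc Walk.nil), by simp [*], by simp, 1,
      by simp [List.filter_cons, eab]⟩ :
     ∃ p : G.Walk a c, p.IsPath ∧
    (∀ x ∈ p.support, x ∈ ({a, b, c, d} : Finset V)) ∧ ∃ i : ℕ,
      (p.edges.filter (fun e => (if e = s(b, c) then 1 else 0) = i)).length = 1)
  have Pbd := (⟨Walk.cons hbc (Walk.cons hcd Walk.nil), by simp [*], by simp, 1,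
      by simp [List.filter_cons, ecd]⟩ :
     ∃ p : G.Walk b d, p.IsPath ∧
    (∀ x ∈ p.support, x ∈ ({a, b, c, d} : Finset V)) ∧ ∃ i : ℕ,
      (p.edges.filter (fun e => (if e = s(b, c) then 1 else 0) = i)).length = 1)
  have Pad := (⟨Walk.cons hab (Walk.cons hbc (Walk.cons hcd Walk.nil)), by simp [*], by simp, 1,
      by simp [List.filter_cons, eab, ecd]⟩ :
     ∃ p : G.Walk a d, p.IsPath ∧
    (∀ x ∈ p.support, x ∈ ({a, b, c, d} : Finset V)) ∧ ∃ i : ℕ,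
      (p.edges.filter (fun e => (if e = s(b, c) then 1 else 0) = i)).length = 1)
  intro u hu v hv huv
  simp only [Finset.mem_insert, Finset.mem_singleton] at hu hv
  rcases hu with rfl | rfl | rfl | rfl <;> rcases hv with rfl | rfl | rfl | rfl <;>
    first
    | exact absurd rfl huv
    | assumption
    | (apply R; assumption)

/-- A connected non-complete graph is a star or contains a path on four vertices. -/
theorem star_or_P4 {V : Type*} {G : SimpleGraph V} (hG : G.Connected) (hT : G ≠ ⊤) :
    (∃ v : V, ∀ a b : V, G.Adj a b ↔ a ≠ b ∧ (a = v ∨ b = v)) ∨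
    ∃ a b c d, G.Adj a b ∧ G.Adj b c ∧ G.Adj c d ∧ a ≠ c ∧ a ≠ d ∧ b ≠ d := by
  by_contra hcon
  push Not at hcon
  obtain ⟨hS, hP⟩ := hcon
  have : ∃ u v w, G.Adj u v ∧ G.Adj v w ∧ u ≠ w ∧ ¬ G.Adj u w := by
    by_contra h
    push Not at h
    apply hT
    ext a b
    rw [top_adj]
    refine ⟨fun h => h.ne, fun hab => ?_⟩
    have := closed_univ hG (fun x => a ≠ x → G.Adj a x) a (fun h => absurd rfl h)
      (fun x y hx hxy hay => by
        by_cases hax : a = x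
        · rw [hax]; exact hxy
        · exact h a x y (hx hax) hxy hay) b
    exact this hab
  obtain ⟨u, v, w, huv, hvw, huw, hnuw⟩ := this
  have hall := closed_univ hG (fun x => x ≠ v → G.Adj v x) v (fun h => absurd rfl h)
    (fun y z hy hyz hzv => by
      by_cases hyv : y = v
      · rw [← hyv]; exact hyz
      have hy := hy hyv
      by_contra hz
      have hzu : z ≠ u := by rintro rfl; exact hz huv.symm
      have hzw : z ≠ w := by rintro rfl; exact hz hvw
      by_cases hyu : y = u
      · exact huw (hyu ▸ hP z y v w hyz.symm hy.symm hvw hzv hzw)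
      · exact hyu (hP z y v u hyz.symm hy.symm huv.symm hzv hzu))
  obtain ⟨a, b, hab⟩ := hS v
  have hab' : G.Adj a b ∧ a ≠ v ∧ b ≠ v := by
    rcases hab with ⟨h1, h2⟩ | ⟨h1, h2, h3⟩
    · exact ⟨h1, h2 h1.ne⟩
    · exfalso
      apply h1
      rcases h3 with rfl | rfl
      · exact hall b h2.symm
      · exact (hall a h2).symm
  obtain ⟨h1, hav, hbv⟩ := hab'
  have Q : ∀ t, G.Adj v t → a ≠ t → b ≠ t → False := fun t ht hat hbt =>
    hbt (hP a b v t h1 (hall b hbv).symm ht hav hat)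
  have q1 := Q u huv.symm
  have q2 := Q w hvw
  by_cases hau : a = u
  · by_cases hbw : b = w
    · subst hau hbw; exact hnuw h1
    · exact q2 (hau ▸ huw) hbw
  · by_cases hbu : b = u
    · by_cases haw : a = w
      · subst hbu haw; exact hnuw h1.symm
      · exact q2 haw (hbu ▸ huw)
    · exact q1 hau hbu

theorem top_le {V : Type*} [Fintype V] : cfcNum (⊤ : SimpleGraph V) ≤ 1 := by
  apply GoodCFC.le
  refine ⟨fun _ => 0, by simp, ?_⟩
  intro u hu v hv huv
  have huv' : (⊤ : SimpleGraph V).Adj u v := huv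
  exact ⟨Walk.cons huv' Walk.nil, by simp [huv], by simp, 0, by simp⟩

theorem star_ge {V : Type*} [Fintype V] {G : SimpleGraph V} {v : V}
    (hS : ∀ a b : V, G.Adj a b ↔ a ≠ b ∧ (a = v ∨ b = v)) {k : ℕ} {c : Sym2 V → Fin k}
    (hc : IsCFCColoring G k c) : Fintype.card V - 1 ≤ k := by
  classical
  have hinj : Function.Injective (fun x : {x : V // x ≠ v} => c s(x.1, v)) := by
    rintro ⟨a, ha⟩ ⟨b, hb⟩ hab
    by_contra hne
    have hne : a ≠ b := fun h => hne (Subtype.ext h)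
    dsimp only at hab
    obtain ⟨p, hp, i, hi⟩ := hc a b hne
    cases p with
    | nil => exact hne rfl
    | @cons _ x _ h p =>
      have hx : x = v := by have := (hS _ _).1 h; tauto
      subst hx
      cases p with
      | nil => exact hb rfl
      | @cons _ y _ h' q =>
        cases q with
        | nil =>
          rw [Sym2.eq_swap] at hab
          by_cases hh : c s(x, b) = i
          · simp [List.filter_cons, hh, hab, Sym2.eq_swap (a := b) (b := x), Sym2.eq_swap (a := a) (b := x)] at hi hab
          · have : c s(a, x) ≠ i := by
              rw [Sym2.eq_swap, hab, Sym2.eq_swap]; exact hh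
            simp [List.filter_cons, hh, this] at hi
        | @cons _ z _ h'' r =>
          have hy := h'.ne
          have hz : z = x := by have := (hS _ _).1 h''; grind
          subst hz
          simp [Walk.cons_isPath_iff] at hp
  have := Fintype.card_le_of_injective _ hinj
  rw [Fintype.card_fin, Fintype.card_subtype_compl, Fintype.card_subtype_eq] at this
  exact this

/-- For a nontrivial connected graph `G` of order `n`: `1 ≤ cfc(G) ≤ n − 1`, with
`cfc(G) = 1` iff `G` is complete, and `cfc(G) = n − 1` iff `G` is the star `K_{1,n−1}`. -/
theorem cfc_bounds_and_extremes {V : Type*} [Fintype V] (G : SimpleGraph V)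
    (hG : G.Connected) (n : ℕ) (hn : Fintype.card V = n) (h2 : 2 ≤ n) :
    1 ≤ cfcNum G ∧ cfcNum G ≤ n - 1 ∧
    (cfcNum G = 1 ↔ G = ⊤) ∧
    (cfcNum G = n - 1 ↔ ∃ v : V, ∀ a b : V, G.Adj a b ↔ a ≠ b ∧ (a = v ∨ b = v)) := by
  classical
  have hnt : Nontrivial V := by rw [← Fintype.one_lt_card_iff_nontrivial]; omega
  have hgood : GoodCFC G Finset.univ (n - 1) := by
    obtain ⟨a⟩ := hG.nonempty
    obtain ⟨b, hab⟩ := hG.preconnected.exists_adj_of_nontrivial a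
    have := GoodCFC.grow hG (n - 2) (Finset.insert_nonempty _ _) (good_edge hab)
      (by rw [Finset.card_pair hab.ne]; omega)
    rwa [show 1 + (n - 2) = n - 1 by omega] at this
  have hle := hgood.le
  have hmem : cfcNum G ∈ {k | ∃ c : Sym2 V → Fin k, IsCFCColoring G k c} := by
    apply Nat.sInf_mem
    obtain ⟨c, hc, hp⟩ := hgood
    have : ({k | ∃ c : Sym2 V → Fin k, IsCFCColoring G k c}).Nonempty := by
      refine ⟨n - 1, fun e => ⟨c e, hc e⟩, ?_⟩
      intro u v huv
      obtain ⟨p, h1, _, i, h3⟩ := hp u (Finset.mem_univ _) v (Finset.mem_univ _) huv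
      have hi : i < n - 1 := by
        by_contra hi
        rw [filter_length_zero p.edges c i (fun e _ => by have := hc e; omega)] at h3
        omega
      refine ⟨p, h1, ⟨i, hi⟩, ?_⟩
      simpa only [Fin.mk.injEq] using h3
    exact this
  obtain ⟨c, hc⟩ := hmem
  have hpos : 1 ≤ cfcNum G := by
    obtain ⟨a⟩ := hG.nonempty
    have := (c s(a, a)).2
    omega
  refine ⟨hpos, hle, ⟨fun h1 => ?_, ?_⟩, ⟨fun h => ?_, ?_⟩⟩
  · ext a b
    rw [top_adj]
    refine ⟨fun h => h.ne, fun hab => ?_⟩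
    obtain ⟨p, hp, i, hi⟩ := hc a b hab
    have : ∀ e, c e = i := by
      intro e
      have h1' := (c e).2
      have h2' := i.2
      ext
      omega
    simp only [this, decide_true, List.filter_true, Walk.length_edges] at hi
    exact Walk.adj_of_length_eq_one hi
  · rintro rfl
    exact le_antisymm top_le hpos
  · by_cases hT : G = ⊤
    · subst hT
      have h1 := top_le (V := V)
      have hn2 : Fintype.card V = 2 := by omega
      obtain ⟨x, y, hxy, hu⟩ := Finset.card_eq_two.1 (Finset.card_univ.trans hn2)
      refine ⟨x, fun a b => ?_⟩
      have ha : a = x ∨ a = y := by simpa [hu] using Finset.mem_univ a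
      have hb : b = x ∨ b = y := by simpa [hu] using Finset.mem_univ b
      rw [top_adj]
      grind
    · rcases star_or_P4 hG hT with h' | ⟨x, y, z, w, hxy, hyz, hzw, hxz, hxw, hyw⟩
      · exact h'
      · exfalso
        have hcard : ({x, y, z, w} : Finset V).card = 4 := by
          have := hxy.ne
          have := hyz.ne
          have := hzw.ne
          simp [*]
        have h4 : 4 ≤ n := by
          rw [← hn, ← hcard]; exact Finset.card_le_univ _
        have := (GoodCFC.grow hG (n - 4) (Finset.insert_nonempty _ _)
          (good_P4 hxy hyz hzw hxz hxw hyw) (by rw [hcard]; omega)).le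
        omega
  · rintro ⟨v, hv⟩
    have := star_ge hv hc
    omega
end

section
/- For every tree T of order n ≥ 3, the vertex ranking number satisfies r(T) ≤ log_{3/2} n, i.e., r(T) ≤ (log n)/(log(3/2)). -/
open SimpleGraph

/-- A `k`-ranking of `G`: a labeling of the vertices by `Fin k` (ordered labels) such that
on every path joining two distinct vertices with the same label there is a vertex with a
strictly larger label. -/
def IsRanking {V : Type*} (G : SimpleGraph V) (k : ℕ) (c : V → Fin k) : Prop :=
  ∀ u v : V, u ≠ v → c u = c v →
    ∀ p : G.Walk u v, p.IsPath → ∃ w ∈ p.support, c u < c w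

/-- The vertex ranking number: the least `k` for which `G` has a `k`-ranking. -/
noncomputable def rankingNumber {V : Type*} (G : SimpleGraph V) : ℕ :=
  sInf {k | ∃ c : V → Fin k, IsRanking G k c}

/-- Delete all edges incident to a set of vertices. -/
def isolate {V : Type*} (G : SimpleGraph V) (X : Set V) : SimpleGraph V where
  Adj u v := G.Adj u v ∧ u ∉ X ∧ v ∉ X
  symm := ⟨fun _ _ h => ⟨h.1.symm, h.2.2, h.2.1⟩⟩
  loopless := ⟨fun _ h => G.loopless.irrefl _ h.1⟩

theorem isolate_le {V : Type*} (G : SimpleGraph V) (X : Set V) : isolate G X ≤ G :=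
  fun _ _ h => h.1

theorem isolate_anti {V : Type*} (G : SimpleGraph V) {X Y : Set V} (h : X ⊆ Y) :
    isolate G Y ≤ isolate G X :=
  fun _ _ hh => ⟨hh.1, fun hx => hh.2.1 (h hx), fun hx => hh.2.2 (h hx)⟩

theorem exists_transfer {V : Type*} (G : SimpleGraph V) (X : Set V) {u v : V} (p : G.Walk u v)
    (hp : p.IsPath) (hX : ∀ w ∈ p.support, w ∉ X) :
    ∃ q : (isolate G X).Walk u v, q.IsPath ∧ q.support = p.support := by
  have he : ∀ e ∈ p.edges, e ∈ (isolate G X).edgeSet := by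
    intro e
    induction e with
    | h a b =>
      intro h
      exact ⟨p.adj_of_mem_edges h, hX _ (p.fst_mem_support_of_mem_edges h),
        hX _ (p.snd_mem_support_of_mem_edges h)⟩
  exact ⟨p.transfer _ he, hp.transfer he, p.support_transfer he⟩

theorem key_step {V : Type*} (G : SimpleGraph V) {x w : V} (h : G.Reachable x w) (hne : x ≠ w) :
    ∃ y, G.Adj x y ∧ (isolate G {x}).Reachable y w ∧ G.dist y w + 1 ≤ G.dist x w := by
  obtain ⟨p, hp, hl⟩ := h.exists_path_of_dist
  cases p with
  | nil => exact absurd rfl hne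
  | @cons _ y _ hadj q =>
    rw [SimpleGraph.Walk.cons_isPath_iff] at hp
    obtain ⟨q2, _, _⟩ := exists_transfer G {x} q hp.1 (by
      intro z hz hzx
      rw [Set.mem_singleton_iff] at hzx
      exact hp.2 (hzx ▸ hz))
    refine ⟨y, hadj, ⟨q2⟩, ?_⟩
    rw [← hl, SimpleGraph.Walk.length_cons]
    exact Nat.succ_le_succ (SimpleGraph.dist_le q)

theorem nbr_unique {V : Type*} (G : SimpleGraph V) (hG : G.IsAcyclic) {x y z : V}
    (hy : G.Adj x y) (hz : G.Adj x z) (h : (isolate G {x}).Reachable z y) : z = y := by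
  by_contra hne
  have hb := SimpleGraph.isAcyclic_iff_forall_edge_isBridge.1 hG
    ((SimpleGraph.mem_edgeSet G).2 hy)
  rw [SimpleGraph.isBridge_iff] at hb
  have hle : isolate G {x} ≤ G.deleteEdges {s(x, y)} := by
    intro a b hab
    rw [SimpleGraph.deleteEdges_adj]
    refine ⟨hab.1, ?_⟩
    have h1 : a ≠ x := hab.2.1
    have h2 : b ≠ x := hab.2.2
    simp only [Set.mem_singleton_iff, Sym2.eq_iff]
    tauto
  have hxz : (G.deleteEdges {s(x, y)}).Adj x z := by
    rw [SimpleGraph.deleteEdges_adj]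
    refine ⟨hz, ?_⟩
    have := hy.ne
    simp only [Set.mem_singleton_iff, Sym2.eq_iff]
    tauto
  exact hb (hxz.reachable.trans (h.mono hle))

theorem exists_centroid_s15 {V : Type*} [Finite V] (G : SimpleGraph V) (hG : G.IsAcyclic)
    (C : G.ConnectedComponent) :
    ∃ x ∈ C.supp, ∀ v ∈ C.supp, v ≠ x →
      2 * {w | (isolate G {x}).Reachable v w}.ncard ≤ C.supp.ncard := by
  classical
  have := Fintype.ofFinite V
  set S : Finset V := C.supp.toFinite.toFinset with hS
  have hmem : ∀ v, v ∈ S ↔ v ∈ C.supp := by simp [hS]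
  have hScard : C.supp.ncard = S.card := Set.ncard_eq_toFinset_card _ _
  obtain ⟨x, hxS, hmin⟩ := S.exists_min_image (fun x => ∑ w ∈ S, (G.dist x w))
    (by obtain ⟨v, hv⟩ := C.nonempty_supp; exact ⟨v, (hmem v).2 hv⟩)
  have hx := (hmem x).1 hxS
  have hreach : ∀ v ∈ C.supp, G.Reachable x v := fun v hv => C.reachable_of_mem_supp hx hv
  refine ⟨x, hx, fun v hv hne => ?_⟩
  obtain ⟨y, hy, hyv, -⟩ := key_step G (hreach v hv) hne.symm
  have hyC : y ∈ C.supp := by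
    have h1 : G.connectedComponentMk x = C := hx
    have h2 : G.connectedComponentMk y = G.connectedComponentMk x :=
      SimpleGraph.ConnectedComponent.sound hy.symm.reachable
    exact h2.trans h1
  by_contra hlt
  push Not at hlt
  set B : Finset V := S.filter (fun w => (isolate G {x}).Reachable v w) with hB
  have hBcard : {w | (isolate G {x}).Reachable v w}.ncard = B.card := by
    rw [← Set.ncard_coe_finset]
    congr 1
    ext w
    simp only [Set.mem_setOf_eq, hB, Finset.coe_filter]
    refine ⟨fun h => ⟨(hmem w).2 ?_, h⟩, fun h => h.2⟩
    have h1 : G.connectedComponentMk v = C := hv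
    have h2 : G.connectedComponentMk w = G.connectedComponentMk v :=
      SimpleGraph.ConnectedComponent.sound (h.mono (isolate_le _ _)).symm
    exact h2.trans h1
  rw [hBcard, hScard] at hlt
  have hm := hmin y ((hmem y).2 hyC)
  have h1 : ∀ w ∈ S, G.dist y w + (if (isolate G {x}).Reachable v w then 2 else 0)
      ≤ G.dist x w + 1 := by
    intro w hw
    split_ifs with hvw
    · have hxw : x ≠ w := by
        rintro rfl
        obtain ⟨p⟩ := hvw.symm
        cases p with
        | nil => exact hne rfl
        | cons h q => exact h.2.1 rfl
      obtain ⟨z, hz, hzw, hd⟩ := key_step G (hreach w ((hmem w).1 hw)) hxw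
      have : z = y := nbr_unique G hG hy hz (hzw.trans (hvw.symm.trans hyv.symm))
      subst this
      omega
    · obtain ⟨p, hp⟩ := (hreach w ((hmem w).1 hw)).exists_walk_length_eq_dist
      have := SimpleGraph.dist_le (SimpleGraph.Walk.cons hy.symm p)
      rw [SimpleGraph.Walk.length_cons] at this
      omega
  have h2 := Finset.sum_le_sum h1
  rw [Finset.sum_add_distrib, Finset.sum_add_distrib, ← Finset.sum_filter, ← hB] at h2
  simp only [Finset.sum_const, smul_eq_mul] at h2
  omega

theorem main_ranking {V : Type*} [Finite V] (k : ℕ) : ∀ (G : SimpleGraph V), G.IsAcyclic →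
    (∀ v, {w | G.Reachable v w}.ncard < 2 ^ (k + 1)) →
    ∃ c : V → ℕ, (∀ v, c v ≤ k) ∧ ∀ u v : V, u ≠ v → c u = c v →
      ∀ p : G.Walk u v, p.IsPath → ∃ w ∈ p.support, c u < c w := by
  classical
  induction k with
  | zero =>
    intro G _ h
    refine ⟨fun _ => 0, fun _ => le_rfl, fun u v huv _ p _ => ?_⟩
    exfalso
    have h1 := h u
    have h2 : 1 < {w | G.Reachable u w}.ncard :=
      (Set.one_lt_ncard (Set.toFinite _)).2
        ⟨u, SimpleGraph.Reachable.refl u, v, ⟨p⟩, huv⟩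
    omega
  | succ k ih =>
    intro G hG h
    choose f hf hf2 using exists_centroid_s15 G hG
    set X : Set V := Set.range f with hX
    obtain ⟨c, hc, hc2⟩ := ih (isolate G X) (hG.anti (isolate_le G X)) (by
      intro v
      by_cases hv : v ∈ X
      · have : {w | (isolate G X).Reachable v w} ⊆ {v} := by
          rintro w ⟨p⟩
          cases p with
          | nil => rfl
          | cons h q => exact absurd hv h.2.1
        have := Set.ncard_le_ncard this (Set.toFinite _)
        rw [Set.ncard_singleton] at this
        have : 1 < 2 ^ (k + 1) := Nat.one_lt_two_pow (by omega)
        omega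
      · set C := G.connectedComponentMk v with hC
        have h1 := hf2 C v rfl (by rintro h; exact hv ⟨C, h.symm⟩)
        have h2 : {w | (isolate G X).Reachable v w} ⊆
            {w | (isolate G {f C}).Reachable v w} := by
          intro w hw
          have hsub : ({f C} : Set V) ⊆ X := Set.singleton_subset_iff.2 ⟨C, rfl⟩
          exact SimpleGraph.Reachable.mono (isolate_anti G hsub) hw
        have h3 := Set.ncard_le_ncard h2 (Set.toFinite _)
        have h4 : C.supp = {w | G.Reachable v w} := by
          ext w
          rw [SimpleGraph.ConnectedComponent.mem_supp_iff, hC, SimpleGraph.ConnectedComponent.eq]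
          exact SimpleGraph.reachable_comm
        have h5 := h v
        rw [← h4] at h5
        have : 2 ^ (k + 1 + 1) = 2 * 2 ^ (k + 1) := by ring
        omega)
    refine ⟨fun v => if v ∈ X then k + 1 else c v, ?_, ?_⟩
    · intro v
      have := hc v
      dsimp only
      split_ifs <;> omega
    · intro u v huv huv2 p hp
      have hcu := hc u
      have hcv := hc v
      by_cases hu : u ∈ X
      · by_cases hv : v ∈ X
        · exfalso
          obtain ⟨C, rfl⟩ := hu
          obtain ⟨D, rfl⟩ := hv
          have h1 : G.connectedComponentMk (f C) = C := hf C
          have h2 : G.connectedComponentMk (f D) = D := hf D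
          have : C = D := by
            rw [← h1, ← h2]
            exact SimpleGraph.ConnectedComponent.sound ⟨p⟩
          exact huv (by rw [this])
        · simp only [hu, hv, if_true, if_false] at huv2
          omega
      · by_cases hv : v ∈ X
        · simp only [hu, hv, if_true, if_false] at huv2
          omega
        · simp only [hu, hv, if_false] at huv2 ⊢
          by_cases hw : ∃ w ∈ p.support, w ∈ X
          · obtain ⟨w, hw, hwX⟩ := hw
            refine ⟨w, hw, ?_⟩
            rw [if_pos hwX]
            omega
          · push Not at hw
            obtain ⟨q, hq, hqs⟩ := exists_transfer G X p hp hw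
            obtain ⟨w, hw1, hw2⟩ := hc2 u v huv huv2 q hq
            rw [hqs] at hw1
            refine ⟨w, hw1, ?_⟩
            rw [if_neg (hw w hw1)]
            exact hw2

theorem pow_bound (k : ℕ) (hk : 2 ≤ k) : ((3 : ℝ) / 2) ^ (k + 1) ≤ 2 ^ k := by
  induction k, hk using Nat.le_induction with
  | base => norm_num
  | succ k _ ih =>
    rw [pow_succ, pow_succ (2 : ℝ)]
    have : (0 : ℝ) < 2 ^ k := by positivity
    nlinarith

/-- For every tree `T` of order `n ≥ 3`, the ranking number satisfies
`r(T) ≤ log n / log (3/2)`. -/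
theorem rankingNumber_tree_le_log {V : Type*} [Fintype V] (T : SimpleGraph V)
    (hT : T.IsTree) (n : ℕ) (hn : Fintype.card V = n) (h3 : 3 ≤ n) :
    (rankingNumber T : ℝ) ≤ Real.log n / Real.log (3 / 2) := by
  have hle : rankingNumber T ≤ Nat.log 2 n + 1 := by
    obtain ⟨c, hc, hc2⟩ := main_ranking (Nat.log 2 n) T hT.isAcyclic (by
      intro v
      have h1 := Set.ncard_le_card {w | T.Reachable v w}
      rw [Nat.card_eq_fintype_card, hn] at h1
      exact lt_of_le_of_lt h1 (Nat.lt_pow_succ_log_self (by norm_num) n))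
    refine Nat.sInf_le ⟨fun v => ⟨c v, Nat.lt_succ_of_le (hc v)⟩, ?_⟩
    intro u v huv he p hp
    obtain ⟨w, hw, hlt⟩ := hc2 u v huv (congrArg Fin.val he) p hp
    exact ⟨w, hw, hlt⟩
  have hpow : ((3 : ℝ) / 2) ^ (Nat.log 2 n + 1) ≤ n := by
    rcases Nat.lt_or_ge n 4 with h4 | h4
    · have : n = 3 := by omega
      subst this
      have : Nat.log 2 3 = 1 := by
        rw [Nat.log_eq_iff] <;> norm_num
      rw [this]
      norm_num
    · have h2 : 2 ≤ Nat.log 2 n := Nat.le_log_of_pow_le (by norm_num) (by omega)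
      refine (pow_bound _ h2).trans ?_
      exact_mod_cast Nat.pow_log_le_self 2 (by omega)
  have hlog : 0 < Real.log (3 / 2) := Real.log_pos (by norm_num)
  rw [le_div_iff₀ hlog]
  have h5 := Real.log_le_log (by positivity) hpow
  rw [Real.log_pow] at h5
  refine le_trans ?_ h5
  have : (rankingNumber T : ℝ) ≤ ((Nat.log 2 n + 1 : ℕ) : ℝ) := by exact_mod_cast hle
  gcongr
end
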